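/- arXiv:1403.0180 — 9 statements merged into one kernel-verified Lean document; each statement's English description precedes it below -/
import Mathlib

section
/- For every triple (x, y, z) of positive real numbers, there exists a unique triple (x', y', z') of positive real numbers such that v(x)·u(y)·v(z) = u(z')·v(y')·u(x') in SL(2,ℝ), and it is given explicitly by x' = xy/(x + xyz + z), y' = x + xyz + z, z' = yz/(x + xyz + z). -/
/- STATEMENT 1: For every triple (x,y,z) of positive reals there is a unique triple
(x',y',z') of positive reals with v(x)·u(y)·v(z) = u(z')·v(y')·u(x'), given explicitly by
x' = xy/(x+xyz+z), y' = x+xyz+z, z' = yz/(x+xyz+z). -/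

noncomputable section

def u (x : ℝ) : Matrix.SpecialLinearGroup (Fin 2) ℝ :=
  ⟨!![1, x; 0, 1], by simp [Matrix.det_fin_two_of]⟩

def v (x : ℝ) : Matrix.SpecialLinearGroup (Fin 2) ℝ :=
  ⟨!![1, 0; x, 1], by simp [Matrix.det_fin_two_of]⟩

/-
The lower-left, upper-left and lower-right entries of `u(c) v(b) u(a)` are `b`, `1 + c b` and
`b a + 1`. When `b ≠ 0` they determine `a`, `b` and `c`, and conversely they determine the whole
matrix, since the upper-right entry can then be recovered from the determinant. The matrix
`v(x) u(y) v(z)` has lower-left entry `x + x y z + z`.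
-/

namespace SLTwo

open Matrix Matrix.SpecialLinearGroup MatrixGroups

section CommRing

variable {R : Type*} [CommRing R]

/-- The upper unitriangular element `[[1, x], [0, 1]]` of `SL(2, R)`; it extends `u` to an arbitrary
commutative ring. -/
def upper (x : R) : SL(2, R) := transvection zero_ne_one x

/-- The lower unitriangular element `[[1, 0], [x, 1]]` of `SL(2, R)`; it extends `v` to an arbitrary
commutative ring. -/
def lower (x : R) : SL(2, R) := transvection one_ne_zero x

theorem coe_upper (x : R) : (upper x : Matrix (Fin 2) (Fin 2) R) = !![1, x; 0, 1] := by
  ext i j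
  fin_cases i <;> fin_cases j <;> simp [upper, transvection_coe]

theorem coe_lower (x : R) : (lower x : Matrix (Fin 2) (Fin 2) R) = !![1, 0; x, 1] := by
  ext i j
  fin_cases i <;> fin_cases j <;> simp [lower, transvection_coe]

theorem coe_lower_mul_upper_mul_lower (x y z : R) :
    ((lower x * upper y * lower z : SL(2, R)) : Matrix (Fin 2) (Fin 2) R) =
      !![1 + y * z, y; x + x * y * z + z, x * y + 1] := by
  simp only [coe_mul, coe_lower, coe_upper, mul_fin_two]
  simp [add_mul, add_assoc]

theorem coe_upper_mul_lower_mul_upper (c b a : R) :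
    ((upper c * lower b * upper a : SL(2, R)) : Matrix (Fin 2) (Fin 2) R) =
      !![1 + c * b, (1 + c * b) * a + c; b, b * a + 1] := by
  simp [coe_lower, coe_upper]

theorem ext_of_apply_one_zero_ne_zero [NoZeroDivisors R] {g h : SL(2, R)} (hg : g 1 0 ≠ 0)
    (h₁₀ : g 1 0 = h 1 0) (h₀₀ : g 0 0 = h 0 0) (h₁₁ : g 1 1 = h 1 1) : g = h := by
  have h₀₁ : g 0 1 = h 0 1 := by
    have hdet : g 0 0 * g 1 1 - g 0 1 * g 1 0 = h 0 0 * h 1 1 - h 0 1 * h 1 0 := by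
      rw [← det_fin_two, ← det_fin_two, det_coe, det_coe]
    rw [← h₀₀, ← h₁₁, ← h₁₀, sub_right_inj] at hdet
    exact mul_right_cancel₀ hg hdet
  ext i j
  fin_cases i <;> fin_cases j <;> assumption

end CommRing

section Field

variable {K : Type*} [Field K]

theorem eq_upper_mul_lower_mul_upper_iff {g : SL(2, K)} (hg : g 1 0 ≠ 0) (a b c : K) :
    g = upper c * lower b * upper a ↔
      a = (g 1 1 - 1) / g 1 0 ∧ b = g 1 0 ∧ c = (g 0 0 - 1) / g 1 0 := by
  have entries := coe_upper_mul_lower_mul_upper c b a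
  constructor
  · intro h
    rw [← h] at entries
    rw [entries] at hg ⊢
    have hb : b ≠ 0 := by simpa using hg
    simp [hb]
  · rintro ⟨rfl, rfl, rfl⟩
    apply ext_of_apply_one_zero_ne_zero hg <;> rw [entries] <;> simp [mul_div_cancel₀, hg]

end Field

theorem u_eq_upper (x : ℝ) : u x = upper x := Subtype.ext (coe_upper x).symm

theorem v_eq_lower (x : ℝ) : v x = lower x := Subtype.ext (coe_lower x).symm

end SLTwo

open SLTwo in
theorem vuv_to_uvu_factorization_general {K : Type*} [Field K] {x y z : K}
    (h : x + x * y * z + z ≠ 0) (a b c : K) :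
    lower x * upper y * lower z = upper c * lower b * upper a ↔
      a = x * y / (x + x * y * z + z) ∧ b = x + x * y * z + z ∧
        c = y * z / (x + x * y * z + z) := by
  have entries := coe_lower_mul_upper_mul_lower x y z
  rw [eq_upper_mul_lower_mul_upper_iff (by simpa [entries] using h), entries]
  simp

theorem vuv_to_uvu_factorization (x y z : ℝ) (hx : 0 < x) (hy : 0 < y) (hz : 0 < z) :
    (∃! p : ℝ × ℝ × ℝ, (0 < p.1 ∧ 0 < p.2.1 ∧ 0 < p.2.2) ∧
      v x * u y * v z = u p.2.2 * v p.2.1 * u p.1) ∧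
    v x * u y * v z =
      u (y * z / (x + x * y * z + z)) * v (x + x * y * z + z) *
        u (x * y / (x + x * y * z + z)) := by
  have hb : 0 < x + x * y * z + z := by positivity
  simp only [SLTwo.u_eq_upper, SLTwo.v_eq_lower, vuv_to_uvu_factorization_general hb.ne', and_self,
    and_true]
  refine ⟨(x * y / (x + x * y * z + z), x + x * y * z + z, y * z / (x + x * y * z + z)),
    ⟨⟨by positivity, hb, by positivity⟩, rfl, rfl, rfl⟩, ?_⟩
  rintro ⟨a, b, c⟩ ⟨-, rfl, rfl, rfl⟩
  rfl
end
end

section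
/- The map R : (ℝ_{>0})³ → (ℝ_{>0})³ defined by R(x, y, z) = (xy/(x + xyz + z), x + xyz + z, yz/(x + xyz + z)) is an involution, i.e. R(R(x, y, z)) = (x, y, z) for all positive reals x, y, z. -/
/- STATEMENT 2: The map R(x,y,z) = (xy/(x+xyz+z), x+xyz+z, yz/(x+xyz+z)) on positive
triples is an involution. -/

noncomputable section

/-- The map `R` on triples of (positive) reals. -/
def Rmap (p : ℝ × ℝ × ℝ) : ℝ × ℝ × ℝ :=
  (p.1 * p.2.1 / (p.1 + p.1 * p.2.1 * p.2.2 + p.2.2),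
   p.1 + p.1 * p.2.1 * p.2.2 + p.2.2,
   p.2.1 * p.2.2 / (p.1 + p.1 * p.2.1 * p.2.2 + p.2.2))

/-!
Write `(x', y', z') = R(x, y, z)`. The products `x'y' = xy` and `y'z' = yz` are invariants, and
the polynomial `D = x + xyz + z` satisfies `D · y = xy + xy · yz + yz`, so `D · y` is an invariant
too. As `y' = D(x, y, z)`, this makes `R` exchange `y` and `D`. Hence applying `R` twice restores
`y`, and then the two products restore `x` and `z`.
-/

variable {K : Type*} [Semifield K] {p : K × K × K}

/-- The common denominator `x + xyz + z` of the components of `R(x, y, z)`, which is also the middle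
component, over an arbitrary semifield. -/
def rmapDenom (p : K × K × K) : K :=
  p.1 + p.1 * p.2.1 * p.2.2 + p.2.2

/-- The map `R` on triples over an arbitrary semifield. It carries its usual meaning only where
`rmapDenom` does not vanish, since `a / 0 = 0`. -/
def rmapOver (p : K × K × K) : K × K × K :=
  (p.1 * p.2.1 / rmapDenom p, rmapDenom p, p.2.1 * p.2.2 / rmapDenom p)

theorem Rmap_eq_rmapOver : Rmap = rmapOver :=
  rfl

theorem rmapOver_snd_fst (p : K × K × K) : (rmapOver p).2.1 = rmapDenom p :=
  rfl

theorem rmapOver_fst_mul_snd_fst (hD : rmapDenom p ≠ 0) :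
    (rmapOver p).1 * (rmapOver p).2.1 = p.1 * p.2.1 :=
  div_mul_cancel₀ _ hD

theorem rmapOver_snd_fst_mul_snd_snd (hD : rmapDenom p ≠ 0) :
    (rmapOver p).2.1 * (rmapOver p).2.2 = p.2.1 * p.2.2 :=
  mul_div_cancel₀ _ hD

theorem rmapDenom_mul_snd_fst (p : K × K × K) :
    rmapDenom p * p.2.1 = p.1 * p.2.1 + p.1 * p.2.1 * (p.2.1 * p.2.2) + p.2.1 * p.2.2 := by
  rw [rmapDenom]
  ring

theorem rmapDenom_rmapOver (hD : rmapDenom p ≠ 0) : rmapDenom (rmapOver p) = p.2.1 := by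
  have invariant :
      rmapDenom (rmapOver p) * (rmapOver p).2.1 = rmapDenom p * p.2.1 := by
    rw [rmapDenom_mul_snd_fst, rmapDenom_mul_snd_fst, rmapOver_fst_mul_snd_fst hD,
      rmapOver_snd_fst_mul_snd_snd hD]
  rw [rmapOver_snd_fst, mul_comm] at invariant
  exact mul_left_cancel₀ hD invariant

theorem Rmap_involution_general (hy : p.2.1 ≠ 0) (hD : rmapDenom p ≠ 0) :
    rmapOver (rmapOver p) = p := by
  have snd_fst_eq : (rmapOver (rmapOver p)).2.1 = p.2.1 := rmapDenom_rmapOver hD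
  have hD' : rmapDenom (rmapOver p) ≠ 0 := by rwa [rmapDenom_rmapOver hD]
  have fst_mul := (rmapOver_fst_mul_snd_fst hD').trans (rmapOver_fst_mul_snd_fst hD)
  have mul_snd := (rmapOver_snd_fst_mul_snd_snd hD').trans (rmapOver_snd_fst_mul_snd_snd hD)
  rw [snd_fst_eq] at fst_mul mul_snd
  exact Prod.ext (mul_right_cancel₀ hy fst_mul)
    (Prod.ext snd_fst_eq (mul_left_cancel₀ hy mul_snd))

theorem Rmap_involution (x y z : ℝ) (hx : 0 < x) (hy : 0 < y) (hz : 0 < z) :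
    Rmap (Rmap (x, y, z)) = (x, y, z) := by
  have hD : rmapDenom (x, y, z) ≠ 0 := by rw [rmapDenom]; positivity
  rw [Rmap_eq_rmapOver, Rmap_involution_general hy.ne' hD]
end
end

section
/- The map R solves the set-theoretical tetrahedron equation: as maps from (ℝ_{>0})⁶ to itself, R₁₂₃ ∘ R₁₄₅ ∘ R₂₄₆ ∘ R₃₅₆ = R₃₅₆ ∘ R₂₄₆ ∘ R₁₄₅ ∘ R₁₂₃, where Rᵢⱼₖ denotes the map acting as R on the coordinates (xᵢ, xⱼ, xₖ) of (x₁, …, x₆) ∈ (ℝ_{>0})⁶ and as the identity on the remaining coordinates. -/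
/- STATEMENT 3: The map R solves the set-theoretical tetrahedron equation
R₁₂₃ ∘ R₁₄₅ ∘ R₂₄₆ ∘ R₃₅₆ = R₃₅₆ ∘ R₂₄₆ ∘ R₁₄₅ ∘ R₁₂₃ on (ℝ_{>0})⁶. -/

noncomputable section

/-- `RAct i j k` acts as `R` on coordinates `i, j, k` and as the identity elsewhere. -/
def RAct (i j k : Fin 6) (f : Fin 6 → ℝ) : Fin 6 → ℝ := fun l =>
  if l = i then (Rmap (f i, f j, f k)).1
  else if l = j then (Rmap (f i, f j, f k)).2.1
  else if l = k then (Rmap (f i, f j, f k)).2.2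
  else f l

/-!
If `e₁, e₂, e₃` generate a Temperley–Lieb algebra with loop value `0`, comparing the coefficients of
`e₁`, `e₂`, `e₁ e₂`, `e₂ e₁` shows that `R` is the braid move
`(1 + x e₁) (1 + y e₂) (1 + z e₁) = (1 + z' e₂) (1 + y' e₁) (1 + x' e₂)`, where
`(x', y', z') = R (x, y, z)`. The two sides of the tetrahedron equation are the two ways of turning
a reduced word of the longest element of `S₄` into its reverse by braid moves, so they yield two
factorizations of the same element of the algebra. In a suitable representation by `4 × 4` matrices
the nonzero parameters of such a factorization can be read off from the entries of the product.
-/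

section RAct

variable {f : Fin 6 → ℝ} {i j k l : Fin 6}

theorem RAct_apply_left : RAct i j k f i = (Rmap (f i, f j, f k)).1 := if_pos rfl

theorem RAct_apply_middle (hij : i ≠ j) : RAct i j k f j = (Rmap (f i, f j, f k)).2.1 := by
  simp [RAct, hij.symm]

theorem RAct_apply_right (hik : i ≠ k) (hjk : j ≠ k) :
    RAct i j k f k = (Rmap (f i, f j, f k)).2.2 := by
  simp [RAct, hik.symm, hjk.symm]

theorem RAct_apply_of_ne (hi : l ≠ i) (hj : l ≠ j) (hk : l ≠ k) : RAct i j k f l = f l := by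
  simp [RAct, hi, hj, hk]

theorem RAct_pos (hf : ∀ m, 0 < f m) (l : Fin 6) : 0 < RAct i j k f l := by
  have hi := hf i
  have hj := hf j
  have hk := hf k
  have hl := hf l
  unfold RAct Rmap
  split_ifs <;> positivity

end RAct

section LocalYangBaxter

variable {M : Type*}

/-- The local Yang–Baxter equation (parametrized braid relation) with structure map `R` for two
families of elements. The coordinates of `R (x, y, z)` appear on the right in reverse order. -/
def LocalYangBaxter [Mul M] (a b : ℝ → M) : Prop :=
  ∀ ⦃x y z : ℝ⦄, 0 < x → 0 < y → 0 < z →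
    a x * b y * a z =
      b (Rmap (x, y, z)).2.2 * a (Rmap (x, y, z)).2.1 * b (Rmap (x, y, z)).1

theorem LocalYangBaxter.mul_mul_eq_RAct [Mul M] {a b : ℝ → M} (hab : LocalYangBaxter a b)
    {f : Fin 6 → ℝ} (hf : ∀ m, 0 < f m) {i j k : Fin 6} (hij : i ≠ j) (hik : i ≠ k) (hjk : j ≠ k) :
    a (f i) * b (f j) * a (f k) =
      b (RAct i j k f k) * a (RAct i j k f j) * b (RAct i j k f i) := by
  rw [RAct_apply_left, RAct_apply_middle hij, RAct_apply_right hik hjk]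
  exact hab (hf i) (hf j) (hf k)

/-- The product over the inversions `12, 13, 23, 14, 24, 34` of the longest element of `S₄`, taken
in this order; inversion number `m` carries the parameter `f m`, and `a`, `b`, `c` stand for the
three simple reflections. -/
def colexWord {R : Type*} [Mul M] (a b c : R → M) (f : Fin 6 → R) : M :=
  a (f 0) * b (f 1) * a (f 2) * c (f 3) * b (f 4) * a (f 5)

/-- The product over the inversions `34, 24, 14, 23, 13, 12`, the reverse of the order in
`colexWord`. -/
def revColexWord {R : Type*} [Mul M] (a b c : R → M) (f : Fin 6 → R) : M :=
  c (f 5) * b (f 4) * a (f 3) * c (f 2) * b (f 1) * c (f 0)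

variable [Monoid M] {a b c : ℝ → M} {f : Fin 6 → ℝ}

theorem colexWord_eq_revColexWord_RAct_245_135_034_012 (hab : LocalYangBaxter a b)
    (hbc : LocalYangBaxter b c) (hac : ∀ s t, Commute (a s) (c t)) (hf : ∀ m, 0 < f m) :
    colexWord a b c f =
      revColexWord a b c (RAct 2 4 5 (RAct 1 3 5 (RAct 0 3 4 (RAct 0 1 2 f)))) := by
  let f₁ := RAct 0 1 2 f
  let f₂ := RAct 0 3 4 f₁
  let f₃ := RAct 1 3 5 f₂
  let f₄ := RAct 2 4 5 f₃
  have hf₁ : ∀ m, 0 < f₁ m := RAct_pos hf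
  have hf₂ : ∀ m, 0 < f₂ m := RAct_pos hf₁
  have hf₃ : ∀ m, 0 < f₃ m := RAct_pos hf₂
  calc colexWord a b c f
    _ = a (f 0) * b (f 1) * a (f 2) * c (f 3) * b (f 4) * a (f 5) := rfl
    _ = b (f₁ 2) * a (f₁ 1) * (b (f₁ 0) * c (f₁ 3) * b (f₁ 4)) * a (f₁ 5) := by
      rw [hab.mul_mul_eq_RAct hf (by decide) (by decide) (by decide)]
      simp [f₁, RAct_apply_of_ne, mul_assoc]
    _ = b (f₂ 2) * a (f₂ 1) * (c (f₂ 4) * b (f₂ 3) * c (f₂ 0)) * a (f₂ 5) := by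
      rw [hbc.mul_mul_eq_RAct hf₁ (by decide) (by decide) (by decide)]
      simp [f₂, RAct_apply_of_ne]
    _ = b (f₂ 2) * c (f₂ 4) * (a (f₂ 1) * b (f₂ 3) * a (f₂ 5)) * c (f₂ 0) := by
      simp only [mul_assoc, (hac _ _).eq, (hac _ _).left_comm]
    _ = (b (f₃ 2) * c (f₃ 4) * b (f₃ 5)) * a (f₃ 3) * b (f₃ 1) * c (f₃ 0) := by
      rw [hab.mul_mul_eq_RAct hf₂ (by decide) (by decide) (by decide)]
      simp [f₃, RAct_apply_of_ne, mul_assoc]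
    _ = c (f₄ 5) * b (f₄ 4) * (c (f₄ 2) * a (f₄ 3)) * b (f₄ 1) * c (f₄ 0) := by
      rw [hbc.mul_mul_eq_RAct hf₃ (by decide) (by decide) (by decide)]
      simp [f₄, RAct_apply_of_ne, mul_assoc]
    _ = revColexWord a b c f₄ := by
      simp only [revColexWord, ← (hac _ _).eq, mul_assoc]

theorem colexWord_eq_revColexWord_RAct_012_034_135_245 (hab : LocalYangBaxter a b)
    (hbc : LocalYangBaxter b c) (hac : ∀ s t, Commute (a s) (c t)) (hf : ∀ m, 0 < f m) :
    colexWord a b c f =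
      revColexWord a b c (RAct 0 1 2 (RAct 0 3 4 (RAct 1 3 5 (RAct 2 4 5 f)))) := by
  let f₁ := RAct 2 4 5 f
  let f₂ := RAct 1 3 5 f₁
  let f₃ := RAct 0 3 4 f₂
  let f₄ := RAct 0 1 2 f₃
  have hf₁ : ∀ m, 0 < f₁ m := RAct_pos hf
  have hf₂ : ∀ m, 0 < f₂ m := RAct_pos hf₁
  have hf₃ : ∀ m, 0 < f₃ m := RAct_pos hf₂
  calc colexWord a b c f
    _ = a (f 0) * b (f 1) * c (f 3) * (a (f 2) * b (f 4) * a (f 5)) := by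
      simp only [colexWord, mul_assoc, (hac _ _).left_comm]
    _ = a (f₁ 0) * (b (f₁ 1) * c (f₁ 3) * b (f₁ 5)) * a (f₁ 4) * b (f₁ 2) := by
      rw [hab.mul_mul_eq_RAct hf (by decide) (by decide) (by decide)]
      simp [f₁, RAct_apply_of_ne, mul_assoc]
    _ = a (f₂ 0) * (c (f₂ 5) * b (f₂ 3) * c (f₂ 1)) * a (f₂ 4) * b (f₂ 2) := by
      rw [hbc.mul_mul_eq_RAct hf₁ (by decide) (by decide) (by decide)]
      simp [f₂, RAct_apply_of_ne]
    _ = c (f₂ 5) * (a (f₂ 0) * b (f₂ 3) * a (f₂ 4)) * c (f₂ 1) * b (f₂ 2) := by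
      simp only [mul_assoc, (hac _ _).left_comm]
    _ = c (f₃ 5) * b (f₃ 4) * a (f₃ 3) * (b (f₃ 0) * c (f₃ 1) * b (f₃ 2)) := by
      rw [hab.mul_mul_eq_RAct hf₂ (by decide) (by decide) (by decide)]
      simp [f₃, RAct_apply_of_ne, mul_assoc]
    _ = c (f₄ 5) * b (f₄ 4) * a (f₄ 3) * (c (f₄ 2) * b (f₄ 1) * c (f₄ 0)) := by
      rw [hbc.mul_mul_eq_RAct hf₃ (by decide) (by decide) (by decide)]
      simp [f₄, RAct_apply_of_ne]
    _ = revColexWord a b c f₄ := by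
      simp only [revColexWord, mul_assoc]

end LocalYangBaxter

section TemperleyLieb

/-- The relations between two neighbouring generators of a Temperley–Lieb algebra with loop value
`0`. -/
structure IsTemperleyLiebPair {A : Type*} [MulZeroClass A] (p q : A) : Prop where
  mul_self_left : p * p = 0
  mul_self_right : q * q = 0
  left_mul_right_mul_left : p * q * p = p
  right_mul_left_mul_right : q * p * q = q

variable {R A : Type*} [CommSemiring R] [Semiring A] [Algebra R A]

/-- The element `1 + t e`, a one-parameter group in `t` when `e * e = 0`. -/
def oneAddSMul (e : A) (t : R) : A := 1 + t • e

theorem commute_oneAddSMul {p q : A} (hpq : Commute p q) (s t : R) :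
    Commute (oneAddSMul p s) (oneAddSMul q t) :=
  (Commute.one_left _).add_left <|
    (Commute.one_right _).add_right <| (hpq.smul_left s).smul_right t

namespace IsTemperleyLiebPair

variable {p q : A}

theorem symm (h : IsTemperleyLiebPair p q) : IsTemperleyLiebPair q p :=
  ⟨h.mul_self_right, h.mul_self_left, h.right_mul_left_mul_right, h.left_mul_right_mul_left⟩

theorem oneAddSMul_mul_mul (h : IsTemperleyLiebPair p q) (x y z : R) :
    oneAddSMul p x * oneAddSMul q y * oneAddSMul p z =
      1 + (x + x * y * z + z) • p + y • q + (x * y) • (p * q) + (y * z) • (q * p) := by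
  have hpqp : p * (q * p) = p := by rw [← mul_assoc, h.left_mul_right_mul_left]
  simp only [oneAddSMul, mul_add, add_mul, one_mul, mul_one, smul_mul_smul_comm, mul_assoc,
    h.mul_self_left, hpqp, smul_zero]
  module

theorem localYangBaxter [Algebra ℝ A] (h : IsTemperleyLiebPair p q) :
    LocalYangBaxter (oneAddSMul (R := ℝ) p) (oneAddSMul q) := by
  intro x y z hx hy hz
  set d := x + x * y * z + z with hd
  have hd₀ : d ≠ 0 := by positivity
  have hR : Rmap (x, y, z) = (x * y / d, d, y * z / d) := rfl
  have coeff_pq : d * (x * y / d) = x * y := by field_simp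
  have coeff_qp : y * z / d * d = y * z := by field_simp
  have coeff_q : y * z / d + y * z / d * d * (x * y / d) + x * y / d = y := by
    field_simp
    rw [hd]
    ring
  rw [hR, h.oneAddSMul_mul_mul, h.symm.oneAddSMul_mul_mul, coeff_q, coeff_qp, coeff_pq]
  abel

end IsTemperleyLiebPair

end TemperleyLieb

section Representation

/-- Matrices satisfying the relations of the three generators of the Temperley–Lieb algebra on four
strands with loop value `0`. The second matrix is an all-ones block between two planes; with smaller
blocks the product of a word would not determine its parameters. -/
def tlMatrix (R : Type*) [Zero R] [One R] : Fin 3 → Matrix (Fin 4) (Fin 4) R :=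
  ![!![0, 1, 0, 0; 0, 0, 0, 0; 0, 0, 0, 0; 0, 0, 0, 0],
    !![0, 0, 0, 0; 1, 0, 1, 0; 0, 0, 0, 0; 1, 0, 1, 0],
    !![0, 0, 0, 0; 0, 0, 0, 0; 0, 0, 0, 1; 0, 0, 0, 0]]

variable (R : Type*) [CommSemiring R]

theorem isTemperleyLiebPair_tlMatrix_zero_one :
    IsTemperleyLiebPair (tlMatrix R 0) (tlMatrix R 1) := by
  constructor <;> ext i j <;> fin_cases i <;> fin_cases j <;> simp [tlMatrix]

theorem isTemperleyLiebPair_tlMatrix_one_two :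
    IsTemperleyLiebPair (tlMatrix R 1) (tlMatrix R 2) := by
  constructor <;> ext i j <;> fin_cases i <;> fin_cases j <;> simp [tlMatrix]

theorem commute_tlMatrix_zero_two : Commute (tlMatrix R 0) (tlMatrix R 2) := by
  ext i j
  fin_cases i <;> fin_cases j <;> simp [tlMatrix]

variable {R}

theorem oneAddSMul_tlMatrix_zero (t : R) :
    oneAddSMul (tlMatrix R 0) t = !![1, t, 0, 0; 0, 1, 0, 0; 0, 0, 1, 0; 0, 0, 0, 1] := by
  ext i j
  fin_cases i <;> fin_cases j <;> simp [oneAddSMul, tlMatrix]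

theorem oneAddSMul_tlMatrix_one (t : R) :
    oneAddSMul (tlMatrix R 1) t = !![1, 0, 0, 0; t, 1, t, 0; 0, 0, 1, 0; t, 0, t, 1] := by
  ext i j
  fin_cases i <;> fin_cases j <;> simp [oneAddSMul, tlMatrix]

theorem oneAddSMul_tlMatrix_two (t : R) :
    oneAddSMul (tlMatrix R 2) t = !![1, 0, 0, 0; 0, 1, 0, 0; 0, 0, 1, t; 0, 0, 0, 1] := by
  ext i j
  fin_cases i <;> fin_cases j <;> simp [oneAddSMul, tlMatrix]

/-- The word `revColexWord` in the factors `1 + t e` for the matrices `tlMatrix`. -/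
def tlWord (f : Fin 6 → R) : Matrix (Fin 4) (Fin 4) R :=
  revColexWord (oneAddSMul (tlMatrix R 0)) (oneAddSMul (tlMatrix R 1)) (oneAddSMul (tlMatrix R 2)) f

theorem tlWord_eq (f : Fin 6 → R) :
    tlWord f =
      let B := f 1 + f 4 * (1 + f 1 * f 3 + f 1 * f 2)
      let C := 1 + f 1 * f 2 + f 5 * B
      !![1 + f 1 * f 3, f 3, f 1 * f 3, f 0 * (f 1 * f 3);
        B, 1 + f 3 * f 4, B, f 0 * B + f 2 * f 4;
        f 1 * f 2 + f 5 * B, f 5 * (f 3 * f 4), C, f 0 * C + f 2 + f 5 * (1 + f 2 * f 4);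
        B, f 3 * f 4, B, 1 + f 0 * B + f 2 * f 4] := by
  simp only [tlWord, revColexWord, oneAddSMul_tlMatrix_zero, oneAddSMul_tlMatrix_one,
    oneAddSMul_tlMatrix_two]
  ext i j
  simp only [Matrix.mul_apply, Fin.sum_univ_four]
  fin_cases i <;> fin_cases j <;>
    simp only [Fin.zero_eta, Fin.mk_one, Fin.reduceFinMk, Matrix.of_apply, Matrix.cons_val',
      Matrix.cons_val_fin_one, Matrix.cons_val, mul_one, one_mul, mul_zero, zero_mul, add_zero,
      zero_add] <;>
    ring

theorem tlWord_injOn [IsCancelAdd R] [IsCancelMulZero R] :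
    Set.InjOn tlWord {f : Fin 6 → R | ∀ m, f m ≠ 0} := by
  intro f _ g hg hfg
  have entry (i j : Fin 4) : tlWord f i j = tlWord g i j := congrFun₂ hfg i j
  simp only [tlWord_eq] at entry
  have h3 : f 3 = g 3 := entry 0 1
  have h4 : f 4 = g 4 := by
    have h : f 3 * f 4 = g 3 * g 4 := entry 3 1
    rw [h3] at h
    exact mul_left_cancel₀ (hg 3) h
  have h5 : f 5 = g 5 := by
    have h : f 5 * (f 3 * f 4) = g 5 * (g 3 * g 4) := entry 2 1
    rw [h3, h4] at h
    exact mul_right_cancel₀ (mul_ne_zero (hg 3) (hg 4)) h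
  have h1 : f 1 = g 1 := by
    have h : f 1 * f 3 = g 1 * g 3 := entry 0 2
    rw [h3] at h
    exact mul_right_cancel₀ (hg 3) h
  have h0 : f 0 = g 0 := by
    have h : f 0 * (f 1 * f 3) = g 0 * (g 1 * g 3) := entry 0 3
    rw [h1, h3] at h
    exact mul_right_cancel₀ (mul_ne_zero (hg 1) (hg 3)) h
  have h2 : f 2 = g 2 := by
    have hB : f 1 + f 4 * (1 + f 1 * f 3 + f 1 * f 2) =
        g 1 + g 4 * (1 + g 1 * g 3 + g 1 * g 2) := entry 1 0
    have h : f 1 * f 2 + f 5 * (f 1 + f 4 * (1 + f 1 * f 3 + f 1 * f 2)) =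
        g 1 * g 2 + g 5 * (g 1 + g 4 * (1 + g 1 * g 3 + g 1 * g 2)) := entry 2 0
    rw [hB, h1, h5] at h
    exact mul_left_cancel₀ (hg 1) (add_right_cancel h)
  ext m
  fin_cases m <;> assumption

end Representation

theorem tetrahedron_equation (f : Fin 6 → ℝ) (hf : ∀ i, 0 < f i) :
    RAct 0 1 2 (RAct 0 3 4 (RAct 1 3 5 (RAct 2 4 5 f))) =
      RAct 2 4 5 (RAct 1 3 5 (RAct 0 3 4 (RAct 0 1 2 f))) := by
  have h₀₁ := (isTemperleyLiebPair_tlMatrix_zero_one ℝ).localYangBaxter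
  have h₁₂ := (isTemperleyLiebPair_tlMatrix_one_two ℝ).localYangBaxter
  have h₀₂ := commute_oneAddSMul (R := ℝ) (commute_tlMatrix_zero_two ℝ)
  apply tlWord_injOn
  · exact fun m => (RAct_pos (RAct_pos <| RAct_pos <| RAct_pos hf) m).ne'
  · exact fun m => (RAct_pos (RAct_pos <| RAct_pos <| RAct_pos hf) m).ne'
  · exact (colexWord_eq_revColexWord_RAct_012_034_135_245 h₀₁ h₁₂ h₀₂ hf).symm.trans
      (colexWord_eq_revColexWord_RAct_245_135_034_012 h₀₁ h₁₂ h₀₂ hf)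
end
end

section
/- For every positive real number x, the path γₓ : [0, 1] → SL(2,ℝ) defined by γₓ(t) = (v(−xt)·u(2t/x))², which runs from the identity matrix I to −I, is path-homotopic (homotopic relative to its endpoints) to the path ω₁ : [0, 1] → SL(2,ℝ), ω₁(t) = [[cos(πt), sin(πt)], [−sin(πt), cos(πt)]]. (Equivalently, the lift of γₓ to the universal cover of PSL(2,ℝ) represents the generator Φ(1) of the fundamental group of PSL(2,ℝ).) -/
/- STATEMENT 5: For every positive real x, the path γₓ(t) = (v(−xt)·u(2t/x))² in SL(2,ℝ),
running from I to −I, is path-homotopic (rel endpoints) to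
ω₁(t) = [[cos πt, sin πt], [−sin πt, cos πt]]. -/

noncomputable section

open Real

/-- The rotation matrix `[[cos θ, sin θ], [−sin θ, cos θ]]` as an element of SL(2,ℝ). -/
def rotSL (θ : ℝ) : Matrix.SpecialLinearGroup (Fin 2) ℝ :=
  ⟨!![Real.cos θ, Real.sin θ; -Real.sin θ, Real.cos θ], by
    simp [Matrix.det_fin_two_of]; ring_nf; rw [add_comm]; exact Real.sin_sq_add_cos_sq θ⟩

/-- The element −I of SL(2,ℝ). -/
def negI : Matrix.SpecialLinearGroup (Fin 2) ℝ :=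
  ⟨!![-1, 0; 0, -1], by simp [Matrix.det_fin_two_of]⟩

/-- The standard topology on SL(2,ℝ), induced from the space of 2×2 real matrices. -/
instance : TopologicalSpace (Matrix.SpecialLinearGroup (Fin 2) ℝ) :=
  TopologicalSpace.induced (fun g => (g : Matrix (Fin 2) (Fin 2) ℝ)) inferInstance

/-!
For `A, B` in `SL(2, ℝ)` one has `det (a A + b B) = a² + b² + a b tr (A B⁻¹)`, so the determinant
stays positive along the segment from `A` to `B` as soon as `tr (A B⁻¹) > -2`. Dividing by its
square root then gives a straight-line homotopy inside `SL(2, ℝ)`, stationary wherever the two maps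
agree. For `A = γ t` and `B = ω t` with `0 < t < 1`, the trace of `A B⁻¹` is `cos (π t) tr A` plus a
nonnegative term, because the off-diagonal entries of `A` have the same signs as those of `B`.
As `|tr A| ≤ 2` and `|cos (π t)| < 1`, it exceeds `-2`.
-/

open Matrix
open scoped MatrixGroups unitInterval

theorem det_smul_add_smul_fin_two {R : Type*} [CommRing R] (A B : Matrix (Fin 2) (Fin 2) R)
    (a b : R) :
    (a • A + b • B).det = a ^ 2 * A.det + b ^ 2 * B.det + a * b * (A * B.adjugate).trace := by
  simp only [det_fin_two, trace_fin_two, adjugate_fin_two, mul_apply, Fin.sum_univ_two,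
    Matrix.add_apply, Matrix.smul_apply, smul_eq_mul, of_apply, cons_val', cons_val_zero,
    cons_val_one, cons_val_fin_one]
  ring

theorem det_convexCombo_pos {A B : SL(2, ℝ)} (hAB : -2 < (A * B⁻¹).1.trace) (s : I) :
    0 < ((1 - s : ℝ) • A.1 + (s : ℝ) • B.1).det := by
  obtain ⟨s, hs₀, hs₁⟩ := s
  rw [det_smul_add_smul_fin_two, A.det_coe, B.det_coe, ← Matrix.SpecialLinearGroup.coe_inv,
    ← Matrix.SpecialLinearGroup.coe_mul]
  rcases hs₀.eq_or_lt with rfl | hs₀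
  · simp
  rcases hs₁.eq_or_lt with rfl | hs₁
  · simp
  calc
    0 < (1 - 2 * s) ^ 2 + (1 - s) * s * ((A * B⁻¹).1.trace + 2) :=
      add_pos_of_nonneg_of_pos (sq_nonneg _)
        (mul_pos (mul_pos (sub_pos.2 hs₁) hs₀) (by linarith))
    _ = _ := by ring

/-- The radial projection of the real `2 × 2` matrices of positive determinant onto `SL(2, ℝ)`.
It brings segments between elements of `SL(2, ℝ)` back into the group. -/
def normalizeSL (M : Matrix (Fin 2) (Fin 2) ℝ) (hM : 0 < M.det) : SL(2, ℝ) :=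
  ⟨(√M.det)⁻¹ • M, by
    rw [det_smul, Fintype.card_fin, inv_pow, Real.sq_sqrt hM.le, inv_mul_cancel₀ hM.ne']⟩

theorem normalizeSL_coe (A : SL(2, ℝ)) (hA : 0 < A.1.det) : normalizeSL A.1 hA = A :=
  Subtype.ext (by simp [normalizeSL])

theorem continuous_normalizeSL {X : Type*} [TopologicalSpace X]
    {M : X → Matrix (Fin 2) (Fin 2) ℝ} (hM : Continuous M) (hdet : ∀ x, 0 < (M x).det) :
    Continuous fun x => normalizeSL (M x) (hdet x) :=
  continuous_induced_rng.2 <|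
    (hM.matrix_det.sqrt.inv₀ fun x => (Real.sqrt_pos.2 (hdet x)).ne').smul hM

theorem homotopicRel_of_neg_two_lt_trace_mul_inv {X : Type*} [TopologicalSpace X]
    {f g : C(X, SL(2, ℝ))} {S : Set X} (hfg : Set.EqOn f g S)
    (htr : ∀ x ∉ S, -2 < (f x * (g x)⁻¹).1.trace) : f.HomotopicRel g S := by
  have htr' (x : X) : -2 < (f x * (g x)⁻¹).1.trace := by
    by_cases hx : x ∈ S
    · norm_num [hfg hx]
    · exact htr x hx
  have hf : Continuous fun p : I × X => (f p.2).1 :=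
    continuous_induced_dom.comp (f.continuous.comp continuous_snd)
  have hg : Continuous fun p : I × X => (g p.2).1 :=
    continuous_induced_dom.comp (g.continuous.comp continuous_snd)
  have hs : Continuous fun p : I × X => (p.1 : ℝ) := by fun_prop
  have hcont : Continuous fun p : I × X =>
      (1 - p.1 : ℝ) • (f p.2).1 + (p.1 : ℝ) • (g p.2).1 :=
    ((continuous_const.sub hs).smul hf).add (hs.smul hg)
  exact ⟨{
    toFun p := normalizeSL _ (det_convexCombo_pos (htr' p.2) p.1)
    continuous_toFun := continuous_normalizeSL hcont _
    map_zero_left x := by simp [normalizeSL_coe]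
    map_one_left x := by simp [normalizeSL_coe]
    prop' s x hx := by simp [← hfg hx, ← add_smul, normalizeSL_coe] }⟩

theorem trace_mul_rotSL_inv (A : SL(2, ℝ)) (θ : ℝ) :
    (A * (rotSL θ)⁻¹).1.trace = cos θ * A.1.trace + sin θ * (A.1 0 1 - A.1 1 0) := by
  rw [Matrix.SpecialLinearGroup.coe_mul, Matrix.SpecialLinearGroup.coe_inv]
  simp only [rotSL, adjugate_fin_two, trace_fin_two, mul_apply, Fin.sum_univ_two, of_apply,
    cons_val', cons_val_zero, cons_val_one, cons_val_fin_one]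
  ring

theorem neg_two_lt_trace_mul_rotSL_inv {A : SL(2, ℝ)} (htr : |A.1.trace| ≤ 2)
    (hoff : A.1 1 0 ≤ A.1 0 1) {θ : ℝ} (hθ₀ : 0 < θ) (hθ : θ < π) :
    -2 < (A * (rotSL θ)⁻¹).1.trace := by
  have hsin : 0 < sin θ := sin_pos_of_pos_of_lt_pi hθ₀ hθ
  have hcos : |cos θ| < 1 := by
    rw [← sq_lt_one_iff_abs_lt_one, cos_sq']
    linarith [pow_pos hsin 2]
  have hprod : |cos θ * A.1.trace| < 2 := calc
    |cos θ * A.1.trace| = |cos θ| * |A.1.trace| := abs_mul _ _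
    _ ≤ |cos θ| * 2 := by gcongr
    _ < 2 := by linarith
  rw [trace_mul_rotSL_inv]
  linarith [(abs_lt.1 hprod).1, mul_nonneg hsin.le (sub_nonneg.2 hoff)]

theorem coe_v_neg_mul_u_sq (a b : ℝ) :
    ((v (-a) * u b) ^ 2).1 =
      !![1 - a * b, (2 - a * b) * b; -((2 - a * b) * a), (1 - a * b) ^ 2 - a * b] := by
  rw [Matrix.SpecialLinearGroup.coe_pow, Matrix.SpecialLinearGroup.coe_mul]
  ext i j
  fin_cases i <;> fin_cases j <;>
    simp [u, v, sq, mul_apply, Fin.sum_univ_two] <;> ring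

theorem abs_trace_v_neg_mul_u_sq_le_two {a b : ℝ} (hab₀ : 0 ≤ a * b) (hab : a * b ≤ 4) :
    |((v (-a) * u b) ^ 2).1.trace| ≤ 2 := by
  have htr : ((v (-a) * u b) ^ 2).1.trace = (2 - a * b) ^ 2 - 2 := by
    rw [coe_v_neg_mul_u_sq, trace_fin_two_of]
    ring
  rw [htr, abs_le]
  constructor <;> nlinarith

theorem v_neg_mul_u_sq_one_zero_le_zero_one {a b : ℝ} (ha : 0 ≤ a) (hb : 0 ≤ b)
    (hab : a * b ≤ 2) : ((v (-a) * u b) ^ 2).1 1 0 ≤ ((v (-a) * u b) ^ 2).1 0 1 := by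
  rw [coe_v_neg_mul_u_sq]
  have h : 0 ≤ 2 - a * b := sub_nonneg.2 hab
  exact (neg_nonpos.2 (mul_nonneg h ha)).trans (mul_nonneg h hb)

theorem gamma_homotopic_omega_one (x : ℝ) (hx : 0 < x)
    (γ ω : Path (1 : Matrix.SpecialLinearGroup (Fin 2) ℝ) negI)
    (hγ : ∀ t : unitInterval, γ t = (v (-(x * t)) * u (2 * t / x)) ^ 2)
    (hω : ∀ t : unitInterval, ω t = rotSL (π * t)) :
    γ.Homotopic ω := by
  refine homotopicRel_of_neg_two_lt_trace_mul_inv (S := {0, 1}) ?_ fun t ht => ?_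
  · rintro t (rfl | rfl) <;> simp
  · simp only [Set.mem_insert_iff, Set.mem_singleton_iff, not_or] at ht
    have ht₀ : (0 : ℝ) < t := unitInterval.pos_iff_ne_zero.2 ht.1
    have ht₁ : (t : ℝ) < 1 := unitInterval.lt_one_iff_ne_one.2 ht.2
    have hab : x * t * (2 * t / x) ≤ 2 := calc
      x * t * (2 * t / x) = 2 * (t : ℝ) ^ 2 := by field_simp
      _ ≤ 2 := by nlinarith
    simp only [Path.coe_toContinuousMap, hγ, hω]
    exact neg_two_lt_trace_mul_rotSL_inv
      (abs_trace_v_neg_mul_u_sq_le_two (by positivity) (by linarith))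
      (v_neg_mul_u_sq_one_zero_le_zero_one (by positivity) (by positivity) hab)
      (mul_pos pi_pos ht₀) (mul_lt_of_lt_one_right pi_pos ht₁)
end
end

section
/- Let (x₁, x₂, x₃) be a triple of positive reals and let (x₁', x₂', x₃') be the unique triple of positive reals with v(x₁)·u(x₂)·v(x₃)·u(−x₃')·v(−x₂')·u(−x₁') = I in SL(2,ℝ). Then the loop α at the identity of SL(2,ℝ) obtained by concatenating the six paths t ↦ v(t·x₁), t ↦ v(x₁)·u(t·x₂), t ↦ v(x₁)·u(x₂)·v(t·x₃), t ↦ v(x₁)·u(x₂)·v(x₃)·u(−t·x₃'), t ↦ v(x₁)·u(x₂)·v(x₃)·u(−x₃')·v(−t·x₂'), and t ↦ v(x₁)·u(x₂)·v(x₃)·u(−x₃')·v(−x₂')·u(−t·x₁') (for t ∈ [0, 1]) is null-homotopic, i.e. path-homotopic to the constant loop at the identity. -/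
/- STATEMENT 6: For positive reals (x₁,x₂,x₃) and the (unique) positive triple (y₁,y₂,y₃)
with v(x₁)·u(x₂)·v(x₃)·u(−y₃)·v(−y₂)·u(−y₁) = I, the loop at the identity of SL(2,ℝ)
obtained by concatenating the six straight-line factor paths is null-homotopic. -/

noncomputable section

/-! The upper left entry of a matrix `g` of `SL(2,ℝ)` does not change along `t ↦ g * u (t * x)` and
is affine along `t ↦ g * v (t * x)`. Hence it stays positive along each side of the hexagon as soon
as it is positive at the vertices; at these it takes only the values `1` and `1 + x₂ * x₃`. The
matrices with positive upper left entry form a contractible set: such a matrix is determined by that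
entry and the two off-diagonal ones, which are arbitrary. -/

theorem homotopic_refl_of_range_subset {X : Type*} [TopologicalSpace X] {s : Set X}
    (hs : IsSimplyConnected s) {x : X} {p : Path x x} (hp : Set.range p ⊆ s) :
    p.Homotopic (Path.refl x) :=
  have ⟨F, _⟩ := (isSimplyConnected_iff_exists_homotopy_refl_forall_mem.1 hs).2 x p
    (Set.range_subset_iff.1 hp)
  ⟨F⟩

theorem mul_u_apply_zero_zero (g : Matrix.SpecialLinearGroup (Fin 2) ℝ) (x : ℝ) :
    (g * u x) 0 0 = g 0 0 := by
  simp only [Matrix.SpecialLinearGroup.coe_mul]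
  simp [Matrix.mul_apply, u]

theorem mul_v_apply_zero_zero (g : Matrix.SpecialLinearGroup (Fin 2) ℝ) (x : ℝ) :
    (g * v x) 0 0 = g 0 0 + g 0 1 * x := by
  simp only [Matrix.SpecialLinearGroup.coe_mul]
  simp [Matrix.mul_apply, v]

theorem v_mul_u_mul_v_apply_zero_zero (x y z : ℝ) : (v x * u y * v z) 0 0 = 1 + y * z := by
  simp only [Matrix.SpecialLinearGroup.coe_mul]
  simp [Matrix.mul_apply, u, v]

/-- The matrices of `SL(2,ℝ)` with positive upper left entry, which is the identity component of
the open cell of matrices admitting an LU factorization. -/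
def positiveCell : Set (Matrix.SpecialLinearGroup (Fin 2) ℝ) := {g | 0 < g 0 0}

namespace positiveCell

/-- The coordinates on `positiveCell` given by the first row and the lower left entry. -/
def homeomorphProd : positiveCell ≃ₜ Set.Ioi (0 : ℝ) × ℝ × ℝ where
  toFun g := (⟨g.1 0 0, g.2⟩, g.1 0 1, g.1 1 0)
  invFun p := ⟨⟨!![p.1, p.2.1; p.2.2, (1 + p.2.1 * p.2.2) / p.1], by
    rw [Matrix.det_fin_two_of, mul_div_cancel₀ _ p.1.2.ne']
    ring⟩, p.1.2⟩
  left_inv := by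
    rintro ⟨g, hg : 0 < g 0 0⟩
    have hdet : g 0 0 * g 1 1 - g 0 1 * g 1 0 = 1 := by rw [← Matrix.det_fin_two, g.2]
    have h_lower_right : (1 + g 0 1 * g 1 0) / g 0 0 = g 1 1 :=
      (div_eq_iff hg.ne').2 (by linear_combination -hdet)
    ext i j
    fin_cases i <;> fin_cases j
    · rfl
    · rfl
    · rfl
    · exact h_lower_right
  right_inv _ := rfl
  continuous_toFun := by
    have h_entry (i j : Fin 2) : Continuous fun g : positiveCell => g.1 i j :=
      (continuous_induced_dom.comp continuous_subtype_val).matrix_elem i j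
    exact ((h_entry 0 0).subtype_mk _).prodMk ((h_entry 0 1).prodMk (h_entry 1 0))
  continuous_invFun := by
    refine .subtype_mk (continuous_induced_rng.2 (continuous_matrix fun i j => ?_)) _
    have h_div : Continuous fun p : Set.Ioi (0 : ℝ) × ℝ × ℝ =>
        (1 + p.2.1 * p.2.2) / (p.1 : ℝ) :=
      .div (by fun_prop) (by fun_prop) fun p => p.1.2.ne'
    fin_cases i <;> fin_cases j
    · exact continuous_subtype_val.comp continuous_fst
    · exact continuous_fst.comp continuous_snd
    · exact continuous_snd.comp continuous_snd
    · exact h_div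

theorem contractibleSpace : ContractibleSpace positiveCell :=
  have := (convex_Ioi (0 : ℝ)).contractibleSpace Set.nonempty_Ioi
  homeomorphProd.contractibleSpace

theorem isSimplyConnected : IsSimplyConnected positiveCell :=
  have := contractibleSpace
  SimplyConnectedSpace.ofContractible positiveCell

variable {g : Matrix.SpecialLinearGroup (Fin 2) ℝ} {x y z : ℝ}

theorem one_mem : 1 ∈ positiveCell := zero_lt_one' ℝ

theorem v_mem : v x ∈ positiveCell := zero_lt_one' ℝ

theorem mul_u_mem_iff : g * u x ∈ positiveCell ↔ g ∈ positiveCell := by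
  simp only [positiveCell, Set.mem_ofPred_eq, mul_u_apply_zero_zero]

theorem mul_v_segment_mem (hg : g ∈ positiveCell) (hgv : g * v x ∈ positiveCell)
    (t : unitInterval) : g * v (t * x) ∈ positiveCell := by
  have h_affine : (g * v (t * x)) 0 0 = (1 - (t : ℝ)) * g 0 0 + t * (g * v x) 0 0 := by
    simp only [mul_v_apply_zero_zero]
    ring
  have h_pos := convex_Ioi (0 : ℝ) hg hgv (sub_nonneg.2 t.2.2) t.2.1 (sub_add_cancel 1 (t : ℝ))
  exact h_pos.trans_eq h_affine.symm

theorem v_mul_u_mul_v_mem_iff : v x * u y * v z ∈ positiveCell ↔ -1 < y * z := by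
  rw [positiveCell, Set.mem_ofPred_eq, v_mul_u_mul_v_apply_zero_zero, neg_lt_iff_pos_add']

end positiveCell

theorem hexagon_loop_nullhomotopic_general (x₁ x₂ x₃ y₁ y₂ y₃ : ℝ)
    (hx : -1 < x₂ * x₃)
    (heq : v x₁ * u x₂ * v x₃ * u (-y₃) * v (-y₂) * u (-y₁) =
      (1 : Matrix.SpecialLinearGroup (Fin 2) ℝ))
    (p₁ : Path (1 : Matrix.SpecialLinearGroup (Fin 2) ℝ) (v x₁))
    (p₂ : Path (v x₁) (v x₁ * u x₂))
    (p₃ : Path (v x₁ * u x₂) (v x₁ * u x₂ * v x₃))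
    (p₄ : Path (v x₁ * u x₂ * v x₃) (v x₁ * u x₂ * v x₃ * u (-y₃)))
    (p₅ : Path (v x₁ * u x₂ * v x₃ * u (-y₃)) (v x₁ * u x₂ * v x₃ * u (-y₃) * v (-y₂)))
    (p₆ : Path (v x₁ * u x₂ * v x₃ * u (-y₃) * v (-y₂))
      (1 : Matrix.SpecialLinearGroup (Fin 2) ℝ))
    (hp₁ : ∀ t : unitInterval, p₁ t = v (t * x₁))
    (hp₂ : ∀ t : unitInterval, p₂ t = v x₁ * u (t * x₂))
    (hp₃ : ∀ t : unitInterval, p₃ t = v x₁ * u x₂ * v (t * x₃))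
    (hp₄ : ∀ t : unitInterval, p₄ t = v x₁ * u x₂ * v x₃ * u (-(t * y₃)))
    (hp₅ : ∀ t : unitInterval, p₅ t = v x₁ * u x₂ * v x₃ * u (-y₃) * v (-(t * y₂)))
    (hp₆ : ∀ t : unitInterval,
      p₆ t = v x₁ * u x₂ * v x₃ * u (-y₃) * v (-y₂) * u (-(t * y₁))) :
    (((((p₁.trans p₂).trans p₃).trans p₄).trans p₅).trans p₆).Homotopic
      (Path.refl (1 : Matrix.SpecialLinearGroup (Fin 2) ℝ)) := by
  have h_vertex₁ : v x₁ ∈ positiveCell := positiveCell.v_mem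
  have h_vertex₂ : v x₁ * u x₂ ∈ positiveCell := positiveCell.mul_u_mem_iff.2 h_vertex₁
  have h_vertex₃ : v x₁ * u x₂ * v x₃ ∈ positiveCell := positiveCell.v_mul_u_mul_v_mem_iff.2 hx
  have h_vertex₄ : v x₁ * u x₂ * v x₃ * u (-y₃) ∈ positiveCell :=
    positiveCell.mul_u_mem_iff.2 h_vertex₃
  have h_vertex₅ : v x₁ * u x₂ * v x₃ * u (-y₃) * v (-y₂) ∈ positiveCell :=
    positiveCell.mul_u_mem_iff.1 (heq ▸ positiveCell.one_mem)
  apply homotopic_refl_of_range_subset positiveCell.isSimplyConnected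
  simp only [Path.trans_range, Set.union_subset_iff, Set.range_subset_iff, hp₁, hp₂, hp₃, hp₄,
    hp₅, hp₆, ← mul_neg, positiveCell.mul_u_mem_iff]
  exact ⟨⟨⟨⟨⟨fun _ => positiveCell.v_mem, fun _ => h_vertex₁⟩,
    positiveCell.mul_v_segment_mem h_vertex₂ h_vertex₃⟩, fun _ => h_vertex₃⟩,
    positiveCell.mul_v_segment_mem h_vertex₄ h_vertex₅⟩, fun _ => h_vertex₅⟩

theorem hexagon_loop_nullhomotopic (x₁ x₂ x₃ y₁ y₂ y₃ : ℝ)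
    (hx₁ : 0 < x₁) (hx₂ : 0 < x₂) (hx₃ : 0 < x₃)
    (hy₁ : 0 < y₁) (hy₂ : 0 < y₂) (hy₃ : 0 < y₃)
    (heq : v x₁ * u x₂ * v x₃ * u (-y₃) * v (-y₂) * u (-y₁) =
      (1 : Matrix.SpecialLinearGroup (Fin 2) ℝ))
    (p₁ : Path (1 : Matrix.SpecialLinearGroup (Fin 2) ℝ) (v x₁))
    (p₂ : Path (v x₁) (v x₁ * u x₂))
    (p₃ : Path (v x₁ * u x₂) (v x₁ * u x₂ * v x₃))
    (p₄ : Path (v x₁ * u x₂ * v x₃) (v x₁ * u x₂ * v x₃ * u (-y₃)))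
    (p₅ : Path (v x₁ * u x₂ * v x₃ * u (-y₃)) (v x₁ * u x₂ * v x₃ * u (-y₃) * v (-y₂)))
    (p₆ : Path (v x₁ * u x₂ * v x₃ * u (-y₃) * v (-y₂))
      (1 : Matrix.SpecialLinearGroup (Fin 2) ℝ))
    (hp₁ : ∀ t : unitInterval, p₁ t = v (t * x₁))
    (hp₂ : ∀ t : unitInterval, p₂ t = v x₁ * u (t * x₂))
    (hp₃ : ∀ t : unitInterval, p₃ t = v x₁ * u x₂ * v (t * x₃))
    (hp₄ : ∀ t : unitInterval, p₄ t = v x₁ * u x₂ * v x₃ * u (-(t * y₃)))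
    (hp₅ : ∀ t : unitInterval, p₅ t = v x₁ * u x₂ * v x₃ * u (-y₃) * v (-(t * y₂)))
    (hp₆ : ∀ t : unitInterval,
      p₆ t = v x₁ * u x₂ * v x₃ * u (-y₃) * v (-y₂) * u (-(t * y₁))) :
    (((((p₁.trans p₂).trans p₃).trans p₄).trans p₅).trans p₆).Homotopic
      (Path.refl (1 : Matrix.SpecialLinearGroup (Fin 2) ℝ)) :=
  hexagon_loop_nullhomotopic_general x₁ x₂ x₃ y₁ y₂ y₃ (by linarith [mul_pos hx₂ hx₃]) heq
    p₁ p₂ p₃ p₄ p₅ p₆ hp₁ hp₂ hp₃ hp₄ hp₅ hp₆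
end
end

section
/- For every triple (x₁, x₂, x₃) of positive real numbers and every ε ∈ {−1, 1}, there exists a unique triple (x̄₁, x̄₂, x̄₃) of real numbers such that v(x₁)·u(−x̄₃)·v(x₂)·u(−x̄₁)·v(x₃)·u(−x̄₂) = ε·I in SL(2,ℝ). -/
/- STATEMENT 7: For all positive reals x₁, x₂, x₃ and every ε ∈ {−1, 1}, there is a unique
triple (x̄₁, x̄₂, x̄₃) of reals with
v(x₁)·u(−x̄₃)·v(x₂)·u(−x̄₁)·v(x₃)·u(−x̄₂) = ε·I in SL(2,ℝ). -/

noncomputable section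

/-! Moving the last three factors to the right-hand side turns the equation into
`z⁻¹ v(x₁) u(-y₃) v(x₂) = u(y₂) v(-x₃) u(y₁)`, where `z = ε I`. An element of `SL(2)` whose lower
left entry `c` is cancellable factors in at most one way as `u(a) v(c) u(b)`: `a` and `b` are read
off the diagonal, and the remaining entry is forced by the determinant. So the lower left entry
fixes `y₃`, the diagonal fixes `y₂` and `y₁`, and the result is the symmetric system
`xᵢ xⱼ yₖ = xᵢ + xⱼ + ε xₖ`, which has exactly one solution when the `xᵢ` are units. -/

section CommRing

open Matrix Matrix.SpecialLinearGroup
open scoped MatrixGroups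

variable {R : Type*} [CommRing R]

/-- The upper unitriangular element `[[1, x], [0, 1]]` of `SL(2, R)`: the analogue of `u` over an
arbitrary commutative ring, encoded as a transvection. -/
abbrev upperTransvection (x : R) : SL(2, R) := transvection (zero_ne_one' (Fin 2)) x

/-- The lower unitriangular element `[[1, 0], [x, 1]]` of `SL(2, R)`: the analogue of `v` over an
arbitrary commutative ring, encoded as a transvection. -/
abbrev lowerTransvection (x : R) : SL(2, R) := transvection (zero_ne_one' (Fin 2)).symm x

theorem coe_upperTransvection (x : R) :
    (upperTransvection x : Matrix (Fin 2) (Fin 2) R) = !![1, x; 0, 1] := by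
  ext i j
  fin_cases i <;> fin_cases j <;> simp [transvection_coe]

theorem coe_lowerTransvection (x : R) :
    (lowerTransvection x : Matrix (Fin 2) (Fin 2) R) = !![1, 0; x, 1] := by
  ext i j
  fin_cases i <;> fin_cases j <;> simp [transvection_coe]

theorem coe_upper_mul_lower_mul_upper (a c b : R) :
    (upperTransvection a * lowerTransvection c * upperTransvection b : Matrix (Fin 2) (Fin 2) R) =
      !![1 + a * c, (1 + a * c) * b + a; c, 1 + c * b] := by
  simp only [coe_upperTransvection, coe_lowerTransvection, mul_fin_two]
  simp [add_comm]

theorem coe_lower_mul_upper_mul_lower (a c b : R) :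
    (lowerTransvection a * upperTransvection c * lowerTransvection b : Matrix (Fin 2) (Fin 2) R) =
      !![1 + c * b, c; a + (1 + a * c) * b, 1 + a * c] := by
  simp only [coe_upperTransvection, coe_lowerTransvection, mul_fin_two]
  simp [add_comm]

theorem eq_upper_mul_lower_mul_upper_iff {A : SL(2, R)} {a b c : R} (hc : IsLeftRegular c) :
    A = upperTransvection a * lowerTransvection c * upperTransvection b ↔
      A 1 0 = c ∧ A 0 0 = 1 + a * c ∧ A 1 1 = 1 + c * b := by
  have hdet : A 0 0 * A 1 1 - A 0 1 * A 1 0 = 1 := by rw [← det_fin_two, det_coe]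
  rw [Matrix.SpecialLinearGroup.ext_iff]
  simp only [coe_mul, coe_upper_mul_lower_mul_upper,
    Fin.forall_fin_two, of_apply, cons_val_zero, cons_val_one, cons_val_fin_one]
  constructor
  · rintro ⟨⟨h00, -⟩, h10, h11⟩
    exact ⟨h10, h00, h11⟩
  · rintro ⟨h10, h00, h11⟩
    have h01 : A 0 1 = (1 + a * c) * b + a := by
      rw [h00, h11, h10] at hdet
      apply hc
      linear_combination -hdet
    exact ⟨⟨h00, h01⟩, h10, h11⟩

theorem hexagon_eq_iff_inv_mul_eq (x₁ x₂ x₃ y₁ y₂ y₃ : R) (z : SL(2, R)) :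
    lowerTransvection x₁ * upperTransvection (-y₃) * lowerTransvection x₂ *
        upperTransvection (-y₁) * lowerTransvection x₃ * upperTransvection (-y₂) = z ↔
      z⁻¹ * (lowerTransvection x₁ * upperTransvection (-y₃) * lowerTransvection x₂) =
        upperTransvection y₂ * lowerTransvection (-x₃) * upperTransvection y₁ := by
  rw [← eq_mul_inv_iff_mul_eq, ← eq_mul_inv_iff_mul_eq, ← eq_mul_inv_iff_mul_eq,
    inv_mul_eq_iff_eq_mul]
  simp only [transvection_inv, neg_neg, mul_assoc]

theorem exists_coe_eq_smul_one_and_inv_eq_self {ε : R} (hε : ε * ε = 1) :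
    ∃ z : SL(2, R), (z : Matrix (Fin 2) (Fin 2) R) = ε • 1 ∧ z⁻¹ = z := by
  let z : SL(2, R) := ⟨ε • 1, by simp [pow_two, hε]⟩
  have hz : z * z = 1 := Subtype.ext <| by
    rw [coe_mul, coe_mk, smul_mul_smul_comm, hε, one_smul, mul_one, coe_one]
  exact ⟨z, rfl, inv_eq_of_mul_eq_one_left hz⟩

theorem hexagon_eq_smul_one_iff {x₁ x₂ x₃ ε : R} (h₁ : IsLeftRegular x₁) (h₂ : IsLeftRegular x₂)
    (h₃ : IsLeftRegular x₃) (hε : ε * ε = 1) (y₁ y₂ y₃ : R) :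
    ((lowerTransvection x₁ * upperTransvection (-y₃) * lowerTransvection x₂ *
        upperTransvection (-y₁) * lowerTransvection x₃ * upperTransvection (-y₂) : SL(2, R)) :
        Matrix (Fin 2) (Fin 2) R) = ε • (1 : Matrix (Fin 2) (Fin 2) R) ↔
      x₂ * x₃ * y₁ = x₂ + x₃ + ε * x₁ ∧ x₁ * x₃ * y₂ = x₁ + x₃ + ε * x₂ ∧
        x₁ * x₂ * y₃ = x₁ + x₂ + ε * x₃ := by
  obtain ⟨z, hz, hz_inv⟩ := exists_coe_eq_smul_one_and_inv_eq_self hε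
  have eq_iff (A : SL(2, R)) : (A : Matrix (Fin 2) (Fin 2) R) = ε • 1 ↔ A = z :=
    hz ▸ Subtype.ext_iff.symm
  have h₃_neg : IsLeftRegular (-x₃) := fun a b h ↦ h₃ (by simpa using h)
  rw [eq_iff, hexagon_eq_iff_inv_mul_eq, hz_inv, eq_upper_mul_lower_mul_upper_iff h₃_neg]
  simp only [coe_mul, hz, coe_lower_mul_upper_mul_lower, smul_mul, one_mul, Matrix.smul_apply,
    of_apply, cons_val_zero, cons_val_one, cons_val_fin_one, smul_eq_mul]
  constructor
  · rintro ⟨h10, h00, h11⟩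
    refine ⟨?_, ?_, ?_⟩
    · linear_combination x₂ * h11 - h10
    · linear_combination x₁ * h00 - h10
    · linear_combination (x₁ + x₂ - x₁ * x₂ * y₃) * hε - ε * h10
  · rintro ⟨hy₁, hy₂, hy₃⟩
    have h10 : ε * (x₁ + (1 + x₁ * -y₃) * x₂) = -x₃ := by
      linear_combination -ε * hy₃ - x₃ * hε
    refine ⟨h10, h₁ ?_, h₂ ?_⟩
    · linear_combination hy₂ + h10
    · linear_combination hy₁ + h10

theorem hexagon_factorization_existsUnique_general {x₁ x₂ x₃ ε : R} (h₁ : IsUnit x₁)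
    (h₂ : IsUnit x₂) (h₃ : IsUnit x₃) (hε : ε * ε = 1) :
    ∃! b : R × R × R,
      ((lowerTransvection x₁ * upperTransvection (-b.2.2) * lowerTransvection x₂ *
          upperTransvection (-b.1) * lowerTransvection x₃ * upperTransvection (-b.2.1) :
          SL(2, R)) : Matrix (Fin 2) (Fin 2) R) = ε • (1 : Matrix (Fin 2) (Fin 2) R) := by
  have hbij {x y : R} (hx : IsUnit x) (hy : IsUnit y) : Function.Bijective (x * y * ·) :=
    IsUnit.isUnit_iff_mulLeft_bijective.mp (hx.mul hy)
  simpa only [hexagon_eq_smul_one_iff h₁.isRegular.left h₂.isRegular.left h₃.isRegular.left hε,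
    Prod.map, Prod.mk.injEq] using
    ((hbij h₂ h₃).prodMap ((hbij h₁ h₃).prodMap (hbij h₁ h₂))).existsUnique
      (x₂ + x₃ + ε * x₁, x₁ + x₃ + ε * x₂, x₁ + x₂ + ε * x₃)

end CommRing

theorem u_eq_upperTransvection (x : ℝ) : u x = upperTransvection x :=
  Subtype.ext (coe_upperTransvection x).symm

theorem v_eq_lowerTransvection (x : ℝ) : v x = lowerTransvection x :=
  Subtype.ext (coe_lowerTransvection x).symm

theorem hexagon_factorization_existsUnique (x₁ x₂ x₃ : ℝ)
    (h₁ : 0 < x₁) (h₂ : 0 < x₂) (h₃ : 0 < x₃)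
    (ε : ℝ) (hε : ε = 1 ∨ ε = -1) :
    ∃! b : ℝ × ℝ × ℝ,
      ((v x₁ * u (-b.2.2) * v x₂ * u (-b.1) * v x₃ * u (-b.2.1) :
          Matrix.SpecialLinearGroup (Fin 2) ℝ) : Matrix (Fin 2) (Fin 2) ℝ) =
        ε • (1 : Matrix (Fin 2) (Fin 2) ℝ) := by
  simpa only [u_eq_upperTransvection, v_eq_lowerTransvection] using
    hexagon_factorization_existsUnique_general h₁.ne'.isUnit h₂.ne'.isUnit h₃.ne'.isUnit
      (mul_self_eq_one_iff.mpr hε)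
end
end

section
/- Let (x₁, x₂, x₃) be a triple of positive reals and let (x̄₁, x̄₂, x̄₃) be the unique triple of reals with v(x₁)·u(−x̄₃)·v(x₂)·u(−x̄₁)·v(x₃)·u(−x̄₂) = I in SL(2,ℝ). Then the loop β at the identity of SL(2,ℝ) obtained by concatenating the six paths t ↦ v(t·x₁), t ↦ v(x₁)·u(−t·x̄₃), t ↦ v(x₁)·u(−x̄₃)·v(t·x₂), t ↦ v(x₁)·u(−x̄₃)·v(x₂)·u(−t·x̄₁), t ↦ v(x₁)·u(−x̄₃)·v(x₂)·u(−x̄₁)·v(t·x₃), and t ↦ v(x₁)·u(−x̄₃)·v(x₂)·u(−x̄₁)·v(x₃)·u(−t·x̄₂) (for t ∈ [0, 1]) is path-homotopic to the loop ω₋₂ : t ↦ [[cos(2πt), −sin(2πt)], [sin(2πt), cos(2πt)]]. (This is the case ε = 1 of the statement that the lift of β to the universal cover of PSL(2,ℝ) represents the class Φ(−(3+ε)/2).) -/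
/- STATEMENT 8: For positive reals (x₁,x₂,x₃) and the (unique) real triple (b₁,b₂,b₃) with
v(x₁)·u(−b₃)·v(x₂)·u(−b₁)·v(x₃)·u(−b₂) = I, the loop β at the identity of SL(2,ℝ) obtained
by concatenating the six factor paths is path-homotopic to
ω₋₂(t) = [[cos 2πt, −sin 2πt],[sin 2πt, cos 2πt]]. -/

noncomputable section

open Real

/-!
Identify `ℝ²` with `ℂ`. Passing to the first column is a homotopy equivalence from SL(2,ℝ) to
`ℂ \ {0}`, so a path in SL(2,ℝ) is determined up to homotopy by its endpoints and the variation of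
the argument of its first column. Right multiplication by `u y` fixes the first column. If `τ` is
the ratio of the second column to the first, right multiplication by `v x` multiplies the first
column by `1 + x * τ`; since `τ` lies in the upper half-plane, for `x > 0` this increases the
argument by an amount in `(0, π)`. Around the hexagon the argument thus grows by an amount in
`(0, 3π)`, which must be `2π` because the loop closes.
-/

variable {g h k : Matrix.SpecialLinearGroup (Fin 2) ℝ}

/-- The `j`-th column of a matrix in SL(2,ℝ) as a complex number, under the identification of `ℝ²`
with `ℂ` that makes rotations act as multiplication by unit complex numbers. -/
def column (g : Matrix.SpecialLinearGroup (Fin 2) ℝ) (j : Fin 2) : ℂ := ⟨g 0 j, g 1 j⟩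

theorem continuous_column (j : Fin 2) : Continuous fun g => column g j := by
  have hcoe : Continuous fun g : Matrix.SpecialLinearGroup (Fin 2) ℝ =>
      (g : Matrix (Fin 2) (Fin 2) ℝ) := continuous_induced_dom
  exact Complex.equivRealProdCLM.symm.continuous.comp
    ((hcoe.matrix_elem 0 j).prodMk (hcoe.matrix_elem 1 j))

theorem ext_column (hcol : ∀ j, column g j = column h j) : g = h := by
  ext i j
  fin_cases i
  · exact congrArg Complex.re (hcol j)
  · exact congrArg Complex.im (hcol j)

theorem column_one_zero : column 1 0 = 1 := by
  apply Complex.ext <;> simp [column]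

theorem column_mul (g h : Matrix.SpecialLinearGroup (Fin 2) ℝ) (j : Fin 2) :
    column (g * h) j = h 0 j * column g 0 + h 1 j * column g 1 := by
  have hentry (i : Fin 2) : (g * h) i j = g i 0 * h 0 j + g i 1 * h 1 j := by
    rw [Matrix.SpecialLinearGroup.coe_mul, Matrix.mul_apply, Fin.sum_univ_two]
  apply Complex.ext <;> simp [column, hentry, mul_comm]

theorem column_mul_u_zero (g : Matrix.SpecialLinearGroup (Fin 2) ℝ) (y : ℝ) :
    column (g * u y) 0 = column g 0 := by
  rw [column_mul]
  simp [u]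

theorem column_rotSL_neg_zero (θ : ℝ) : column (rotSL (-θ)) 0 = Complex.exp (θ * Complex.I) := by
  apply Complex.ext <;>
    simp [column, rotSL, Complex.exp_ofReal_mul_I_re, Complex.exp_ofReal_mul_I_im]

theorem det_fin_two_eq_one {R : Type*} [CommRing R] (g : Matrix.SpecialLinearGroup (Fin 2) R) :
    g 0 0 * g 1 1 - g 0 1 * g 1 0 = 1 := by
  rw [← Matrix.det_fin_two, g.det_coe]

theorem column_zero_ne_zero (g : Matrix.SpecialLinearGroup (Fin 2) ℝ) : column g 0 ≠ 0 := by
  intro h0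
  have hre : g 0 0 = 0 := congrArg Complex.re h0
  have him : g 1 0 = 0 := congrArg Complex.im h0
  have hdet := det_fin_two_eq_one g
  simp [hre, him] at hdet

/-- The ratio of the second column of a matrix in SL(2,ℝ) to the first. It is a point of the upper
half-plane whose real part is the unipotent coordinate of the Iwasawa decomposition. -/
def columnRatio (g : Matrix.SpecialLinearGroup (Fin 2) ℝ) : ℂ := column g 1 / column g 0

theorem continuous_columnRatio : Continuous columnRatio :=
  (continuous_column 1).div (continuous_column 0) column_zero_ne_zero

theorem columnRatio_mul_column_zero (g : Matrix.SpecialLinearGroup (Fin 2) ℝ) :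
    columnRatio g * column g 0 = column g 1 :=
  div_mul_cancel₀ _ (column_zero_ne_zero g)

theorem column_mul_v_zero (g : Matrix.SpecialLinearGroup (Fin 2) ℝ) (x : ℝ) :
    column (g * v x) 0 = column g 0 * (1 + x * columnRatio g) :=
  calc column (g * v x) 0 = column g 0 + x * column g 1 := by
        rw [column_mul]
        simp [v]
    _ = column g 0 * (1 + x * columnRatio g) := by
        rw [← columnRatio_mul_column_zero]
        ring

theorem columnRatio_im (g : Matrix.SpecialLinearGroup (Fin 2) ℝ) :
    (columnRatio g).im = (Complex.normSq (column g 0))⁻¹ := by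
  rw [columnRatio, Complex.div_im, ← sub_div, inv_eq_one_div]
  congr 1
  simp only [column]
  linear_combination det_fin_two_eq_one g

theorem columnRatio_im_pos (g : Matrix.SpecialLinearGroup (Fin 2) ℝ) : 0 < (columnRatio g).im := by
  rw [columnRatio_im]
  exact inv_pos.2 (Complex.normSq_pos.2 (column_zero_ne_zero g))

/-- Iwasawa coordinates on the universal cover of SL(2,ℝ): `(z, s)` is sent to the matrix whose
first column is `exp z` and whose column ratio has real part `s`. -/
def iwasawa (a : ℂ × ℝ) : Matrix.SpecialLinearGroup (Fin 2) ℝ :=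
  let w := Complex.exp a.1
  let w' := (⟨a.2, (Complex.normSq w)⁻¹⟩ : ℂ) * w
  ⟨!![w.re, w'.re; w.im, w'.im], by
    have hw : Complex.normSq w ≠ 0 := Complex.normSq_eq_zero.not.2 (Complex.exp_ne_zero _)
    calc _ = (Complex.normSq w)⁻¹ * Complex.normSq w := by
          simp only [w', Matrix.det_fin_two_of, Complex.mul_re, Complex.mul_im,
            Complex.normSq_apply w]
          ring
      _ = 1 := inv_mul_cancel₀ hw⟩

theorem continuous_iwasawa : Continuous iwasawa := by
  have hw : Continuous fun a : ℂ × ℝ => Complex.exp a.1 := by fun_prop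
  have hτ : Continuous fun a : ℂ × ℝ =>
      (⟨a.2, (Complex.normSq (Complex.exp a.1))⁻¹⟩ : ℂ) :=
    Complex.equivRealProdCLM.symm.continuous.comp <| continuous_snd.prodMk <|
      (Complex.continuous_normSq.comp hw).inv₀ fun a =>
        Complex.normSq_eq_zero.not.2 (Complex.exp_ne_zero _)
  have hw' := hτ.mul hw
  refine continuous_induced_rng.2 (continuous_matrix fun i j => ?_)
  fin_cases i <;> fin_cases j
  exacts [Complex.continuous_re.comp hw, Complex.continuous_re.comp hw',
    Complex.continuous_im.comp hw, Complex.continuous_im.comp hw']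

theorem iwasawa_eq_of_exp_eq_column {z : ℂ} (hz : Complex.exp z = column g 0) :
    iwasawa (z, (columnRatio g).re) = g := by
  refine ext_column fun j => ?_
  fin_cases j
  · exact hz
  · calc column (iwasawa (z, (columnRatio g).re)) 1
        = ⟨(columnRatio g).re, (Complex.normSq (Complex.exp z))⁻¹⟩ * Complex.exp z := rfl
      _ = columnRatio g * column g 0 := by rw [hz, ← columnRatio_im]
      _ = column g 1 := columnRatio_mul_column_zero g

theorem homotopic_of_lifts {X Y : Type*} [TopologicalSpace X] [TopologicalSpace Y]
    [SimplyConnectedSpace X] (f : C(X, Y)) {a b : X} (q q' : Path a b) {y y' : Y} {p p' : Path y y'}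
    (hq : ∀ t, f (q t) = p t) (hq' : ∀ t, f (q' t) = p' t) : p.Homotopic p' := by
  obtain rfl : f a = y := by simpa using hq 0
  obtain rfl : f b = y' := by simpa using hq 1
  obtain rfl : q.map f.continuous = p := Path.ext (funext hq)
  obtain rfl : q'.map f.continuous = p' := Path.ext (funext hq')
  exact (SimplyConnectedSpace.paths_homotopic q q').map f

/-- The first column of the path `p` has a continuous complex logarithm running from `z` to `z'`. -/
def HasColumnLog (p : Path g h) (z z' : ℂ) : Prop :=
  ∃ q : Path z z', ∀ t, Complex.exp (q t) = column (p t) 0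

namespace HasColumnLog

variable {z₀ z₁ z₂ : ℂ}

theorem exp_target {p : Path g h} (hp : HasColumnLog p z₀ z₁) :
    Complex.exp z₁ = column h 0 := by
  obtain ⟨q, hq⟩ := hp
  simpa using hq 1

theorem trans {p : Path g h} {p' : Path h k} (hp : HasColumnLog p z₀ z₁)
    (hp' : HasColumnLog p' z₁ z₂) : HasColumnLog (p.trans p') z₀ z₂ := by
  obtain ⟨q, hq⟩ := hp
  obtain ⟨q', hq'⟩ := hp'
  refine ⟨q.trans q', fun t => ?_⟩
  rw [Path.trans_apply, Path.trans_apply]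
  split_ifs
  exacts [hq _, hq' _]

theorem homotopic {p p' : Path g h} (hp : HasColumnLog p z₀ z₁) (hp' : HasColumnLog p' z₀ z₁) :
    p.Homotopic p' := by
  obtain ⟨q, hq⟩ := hp
  obtain ⟨q', hq'⟩ := hp'
  let unipotentPart (r : Path g h) := r.map (Complex.continuous_re.comp continuous_columnRatio)
  exact homotopic_of_lifts ⟨iwasawa, continuous_iwasawa⟩ (q.prod (unipotentPart p))
    (q'.prod (unipotentPart p')) (fun t => iwasawa_eq_of_exp_eq_column (hq t))
    (fun t => iwasawa_eq_of_exp_eq_column (hq' t))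

end HasColumnLog

theorem hasColumnLog_mul_u {z : ℂ} (hz : Complex.exp z = column g 0) {p : Path g h}
    {y : unitInterval → ℝ} (hp : ∀ t, p t = g * u (y t)) : HasColumnLog p z z :=
  ⟨Path.refl z, fun t => by rw [Path.refl_apply, hz, hp, column_mul_u_zero]⟩

theorem one_add_ofReal_mul_mem_slitPlane {τ : ℂ} (hτ : τ.im ≠ 0) (x : ℝ) :
    1 + x * τ ∈ Complex.slitPlane := by
  rcases eq_or_ne x 0 with rfl | hx
  · simp
  · exact Complex.mem_slitPlane_iff.2 (Or.inr (by simp [hx, hτ]))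

theorem hasColumnLog_mul_v {z : ℂ} (hz : Complex.exp z = column g 0) {x : ℝ} {p : Path g h}
    (hp : ∀ t : unitInterval, p t = g * v (t * x)) :
    HasColumnLog p z (z + Complex.log (1 + x * columnRatio g)) := by
  have hslit (y : ℝ) : 1 + y * columnRatio g ∈ Complex.slitPlane :=
    one_add_ofReal_mul_mem_slitPlane (columnRatio_im_pos g).ne' y
  have hcont : Continuous fun t : unitInterval =>
      z + Complex.log (1 + (t * x : ℝ) * columnRatio g) :=
    continuous_const.add (Continuous.clog (by fun_prop) fun t => hslit _)
  refine ⟨⟨⟨_, hcont⟩, by simp, by simp⟩, fun t => ?_⟩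
  calc Complex.exp (z + Complex.log (1 + (t * x : ℝ) * columnRatio g))
      = column g 0 * (1 + (t * x : ℝ) * columnRatio g) := by
        rw [Complex.exp_add, Complex.exp_log (Complex.slitPlane_ne_zero (hslit _)), hz]
    _ = column (p t) 0 := by rw [hp, column_mul_v_zero]

theorem hasColumnLog_rotSL (c : ℝ) {p : Path g h}
    (hp : ∀ t : unitInterval, p t = rotSL (-(c * t))) :
    HasColumnLog p 0 (c * Complex.I) := by
  refine ⟨⟨⟨fun t => (c * t : ℝ) * Complex.I, by fun_prop⟩, by simp, by simp⟩, fun t => ?_⟩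
  rw [hp, column_rotSL_neg_zero]
  rfl

theorem log_im_mem_Ioo_of_im_pos {w : ℂ} (hw : 0 < w.im) : (Complex.log w).im ∈ Set.Ioo 0 π := by
  rw [Complex.log_im]
  exact ⟨(Complex.arg_nonneg_iff.2 hw.le).lt_of_ne'
    fun h0 => hw.ne' (Complex.arg_eq_zero_iff.1 h0).2, Complex.arg_lt_pi_iff.2 (Or.inr hw.ne')⟩

theorem exists_hasColumnLog_mul_v {z : ℂ} (hz : Complex.exp z = column g 0) {x : ℝ} (hx : 0 < x)
    {p : Path g h} (hp : ∀ t : unitInterval, p t = g * v (t * x)) :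
    ∃ z', HasColumnLog p z z' ∧ z.im < z'.im ∧ z'.im < z.im + π := by
  obtain ⟨hpos, hlt⟩ : (Complex.log (1 + x * columnRatio g)).im ∈ Set.Ioo 0 π :=
    log_im_mem_Ioo_of_im_pos (by simpa using mul_pos hx (columnRatio_im_pos g))
  refine ⟨_, hasColumnLog_mul_v hz hp, ?_, ?_⟩ <;> rw [Complex.add_im] <;> linarith

theorem eq_two_pi_mul_I_of_exp_eq_one {z : ℂ} (hz : Complex.exp z = 1) (hpos : 0 < z.im)
    (hlt : z.im < 4 * π) : z = (2 * π : ℝ) * Complex.I := by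
  obtain ⟨n, rfl⟩ := Complex.exp_eq_one_iff.1 hz
  have him : (n * (2 * π * Complex.I) : ℂ).im = n * (2 * π) := by simp
  rw [him] at hpos hlt
  have hn_pos : 0 < n := by exact_mod_cast pos_of_mul_pos_left hpos two_pi_pos.le
  have hn_lt : n < 2 := by
    have : (n : ℝ) < 2 := lt_of_mul_lt_mul_right (by linarith) two_pi_pos.le
    exact_mod_cast this
  obtain rfl : n = 1 := by lia
  simp

theorem hexagon_loop_eps_one_homotopic (x₁ x₂ x₃ b₁ b₂ b₃ : ℝ)
    (hx₁ : 0 < x₁) (hx₂ : 0 < x₂) (hx₃ : 0 < x₃)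
    (heq : v x₁ * u (-b₃) * v x₂ * u (-b₁) * v x₃ * u (-b₂) =
      (1 : Matrix.SpecialLinearGroup (Fin 2) ℝ))
    (p₁ : Path (1 : Matrix.SpecialLinearGroup (Fin 2) ℝ) (v x₁))
    (p₂ : Path (v x₁) (v x₁ * u (-b₃)))
    (p₃ : Path (v x₁ * u (-b₃)) (v x₁ * u (-b₃) * v x₂))
    (p₄ : Path (v x₁ * u (-b₃) * v x₂) (v x₁ * u (-b₃) * v x₂ * u (-b₁)))
    (p₅ : Path (v x₁ * u (-b₃) * v x₂ * u (-b₁))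
      (v x₁ * u (-b₃) * v x₂ * u (-b₁) * v x₃))
    (p₆ : Path (v x₁ * u (-b₃) * v x₂ * u (-b₁) * v x₃)
      (1 : Matrix.SpecialLinearGroup (Fin 2) ℝ))
    (hp₁ : ∀ t : unitInterval, p₁ t = v (t * x₁))
    (hp₂ : ∀ t : unitInterval, p₂ t = v x₁ * u (-(t * b₃)))
    (hp₃ : ∀ t : unitInterval, p₃ t = v x₁ * u (-b₃) * v (t * x₂))
    (hp₄ : ∀ t : unitInterval, p₄ t = v x₁ * u (-b₃) * v x₂ * u (-(t * b₁)))
    (hp₅ : ∀ t : unitInterval, p₅ t = v x₁ * u (-b₃) * v x₂ * u (-b₁) * v (t * x₃))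
    (hp₆ : ∀ t : unitInterval,
      p₆ t = v x₁ * u (-b₃) * v x₂ * u (-b₁) * v x₃ * u (-(t * b₂)))
    (ω : Path (1 : Matrix.SpecialLinearGroup (Fin 2) ℝ)
      (1 : Matrix.SpecialLinearGroup (Fin 2) ℝ))
    (hω : ∀ t : unitInterval, ω t = rotSL (-(2 * π * t))) :
    (((((p₁.trans p₂).trans p₃).trans p₄).trans p₅).trans p₆).Homotopic ω := by
  have hz₀ : Complex.exp 0 = column 1 0 := by rw [Complex.exp_zero, column_one_zero]
  obtain ⟨z₁, L₁, lower₁, upper₁⟩ :=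
    exists_hasColumnLog_mul_v hz₀ hx₁ (by simpa only [one_mul] using hp₁)
  have L₂ := hasColumnLog_mul_u L₁.exp_target hp₂
  obtain ⟨z₂, L₃, lower₂, upper₂⟩ := exists_hasColumnLog_mul_v L₂.exp_target hx₂ hp₃
  have L₄ := hasColumnLog_mul_u L₃.exp_target hp₄
  obtain ⟨z₃, L₅, lower₃, upper₃⟩ := exists_hasColumnLog_mul_v L₄.exp_target hx₃ hp₅
  have L₆ := hasColumnLog_mul_u L₅.exp_target hp₆
  have hz₃ : z₃ = (2 * π : ℝ) * Complex.I := by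
    rw [Complex.zero_im] at lower₁ upper₁
    exact eq_two_pi_mul_I_of_exp_eq_one (L₆.exp_target.trans column_one_zero)
      (by linarith) (by linarith [pi_pos])
  subst hz₃
  exact (((((L₁.trans L₂).trans L₃).trans L₄).trans L₅).trans L₆).homotopic
    (hasColumnLog_rotSL (2 * π) hω)
end
end

section
/- Let (x₁, x₂, x₃) be a triple of positive reals and let (x̄₁, x̄₂, x̄₃) be the unique triple of reals with v(x₁)·u(−x̄₃)·v(x₂)·u(−x̄₁)·v(x₃)·u(−x̄₂) = −I in SL(2,ℝ). Then the path β from I to −I in SL(2,ℝ) obtained by concatenating the six paths t ↦ v(t·x₁), t ↦ v(x₁)·u(−t·x̄₃), t ↦ v(x₁)·u(−x̄₃)·v(t·x₂), t ↦ v(x₁)·u(−x̄₃)·v(x₂)·u(−t·x̄₁), t ↦ v(x₁)·u(−x̄₃)·v(x₂)·u(−x̄₁)·v(t·x₃), and t ↦ v(x₁)·u(−x̄₃)·v(x₂)·u(−x̄₁)·v(x₃)·u(−t·x̄₂) (for t ∈ [0, 1]) is path-homotopic (relative to endpoints) to the path ω₋₁ : t ↦ [[cos(πt), −sin(πt)],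 [sin(πt), cos(πt)]]. (This is the case ε = −1 of the statement that the lift of β to the universal cover of PSL(2,ℝ) represents the class Φ(−(3+ε)/2).) -/
/- STATEMENT 9: For positive reals (x₁,x₂,x₃) and the (unique) real triple (b₁,b₂,b₃) with
v(x₁)·u(−b₃)·v(x₂)·u(−b₁)·v(x₃)·u(−b₂) = −I, the path β from I to −I in SL(2,ℝ) obtained
by concatenating the six factor paths is path-homotopic (rel endpoints) to
ω₋₁(t) = [[cos πt, −sin πt],[sin πt, cos πt]]. -/

noncomputable section

open Real

/-!
A matrix in `SL(2, ℝ)` is determined by its first column, a nonzero vector, and by the component of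
its second column along the first. Hence the matrices whose first column avoids the vertical ray
`{(0, c) | c ≤ 0}` form a copy of (slit plane) × `ℝ`, which is simply connected, and two paths with
the same endpoints in this set are homotopic. It contains every matrix with nonnegative lower left
entry. Along the rotation path that entry is `sin (π t)`. On the hexagon path, right multiplication
by `u` does not change it and right multiplication by `v (t x)` interpolates it linearly, so it
suffices that its values at the vertices are `0, x₁, x₁, x₃, x₃, 0, 0`, where `x₃` comes from the
relation `g * u (-b₁) * v x₃ * u (-b₂) = -I`.
-/

open Complex Set
open scoped MatrixGroups Pointwise

theorem path_homotopic_of_range_subset {X : Type*} [TopologicalSpace X] {s : Set X}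
    (hs : IsSimplyConnected s) {x y : X} {γ δ : Path x y} (hγ : range γ ⊆ s) (hδ : range δ ⊆ s) :
    γ.Homotopic δ := by
  have : SimplyConnectedSpace s := hs.simplyConnectedSpace
  let lift (η : Path x y) (hη : range η ⊆ s) :
      Path (⟨x, hη η.source_mem_range⟩ : s) ⟨y, hη η.target_mem_range⟩ :=
    { toFun := fun t => ⟨η t, hη ⟨t, rfl⟩⟩
      source' := Subtype.ext η.source
      target' := Subtype.ext η.target }
  exact (SimplyConnectedSpace.paths_homotopic (lift γ hγ) (lift δ hδ)).map
    ⟨Subtype.val, continuous_subtype_val⟩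

theorem isSimplyConnected_slitPlane : IsSimplyConnected slitPlane :=
  have : ContractibleSpace slitPlane :=
    starConvex_one_slitPlane.contractibleSpace ⟨1, one_mem_slitPlane⟩
  SimplyConnectedSpace.ofContractible slitPlane

theorem mem_I_smul_slitPlane_of_im_nonneg {z : ℂ} (hz : z ≠ 0) (him : 0 ≤ z.im) :
    z ∈ I • slitPlane := by
  suffices 0 < z.im ∨ z.re ≠ 0 by
    simpa [mem_smul_set_iff_inv_smul_mem₀ I_ne_zero, mem_slitPlane_iff] using this
  rcases him.eq_or_lt with him₀ | him₀
  · exact Or.inr fun hre => hz (Complex.ext hre him₀.symm)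
  · exact Or.inl him₀

/-- The first column `(a, c)` of a matrix in `SL(2, ℝ)`, encoded as the complex number `a + ci`. -/
def firstColumn (g : SL(2, ℝ)) : ℂ := ⟨g 0 0, g 1 0⟩

/-- The coefficient of the first column of `g` in the orthogonal projection of the second column
onto it. With the first column, which fixes the orthogonal part since `det g = 1`, it determines
`g`. -/
def shear (g : SL(2, ℝ)) : ℝ :=
  (g 0 0 * g 0 1 + g 1 0 * g 1 1) / normSq (firstColumn g)

/-- The matrix in `SL(2, ℝ)` with first column `z` and shear `l`. -/
def ofFirstColumnShear (z : ℂ) (hz : z ≠ 0) (l : ℝ) : SL(2, ℝ) :=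
  ⟨!![z.re, -z.im / normSq z + l * z.re; z.im, z.re / normSq z + l * z.im], by
    have hN : normSq z ≠ 0 := normSq_eq_zero.not.2 hz
    rw [Matrix.det_fin_two_of]
    field_simp
    rw [normSq_apply]
    ring⟩

theorem det_entries_eq_one (g : SL(2, ℝ)) : g 0 0 * g 1 1 - g 0 1 * g 1 0 = 1 :=
  (Matrix.det_fin_two _).symm.trans g.det_coe

theorem firstColumn_ne_zero (g : SL(2, ℝ)) : firstColumn g ≠ 0 := by
  intro h
  have h₀ : g 0 0 = 0 := congrArg re h
  have h₁ : g 1 0 = 0 := congrArg im h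
  simpa [h₀, h₁] using det_entries_eq_one g

theorem shear_ofFirstColumnShear (z : ℂ) (hz : z ≠ 0) (l : ℝ) :
    shear (ofFirstColumnShear z hz l) = l := by
  have hN : normSq z ≠ 0 := normSq_eq_zero.not.2 hz
  change (z.re * (-z.im / normSq z + l * z.re) + z.im * (z.re / normSq z + l * z.im)) /
    normSq z = l
  field_simp
  rw [normSq_apply]
  ring

theorem ofFirstColumnShear_firstColumn_shear (g : SL(2, ℝ)) :
    ofFirstColumnShear (firstColumn g) (firstColumn_ne_zero g) (shear g) = g := by
  have hdet := det_entries_eq_one g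
  have hN : normSq (firstColumn g) ≠ 0 := normSq_eq_zero.not.2 (firstColumn_ne_zero g)
  have hN' : normSq (firstColumn g) = g 0 0 * g 0 0 + g 1 0 * g 1 0 := normSq_apply _
  ext i j
  fin_cases i <;> fin_cases j
  · rfl
  · change -g 1 0 / normSq (firstColumn g) + shear g * g 0 0 = g 0 1
    rw [shear]
    field_simp
    linear_combination g 1 0 * hdet - g 0 1 * hN'
  · rfl
  · change g 0 0 / normSq (firstColumn g) + shear g * g 1 0 = g 1 1
    rw [shear]
    field_simp
    linear_combination -g 0 0 * hdet - g 1 1 * hN'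

theorem continuous_entry (i j : Fin 2) : Continuous fun g : SL(2, ℝ) => g i j :=
  Continuous.matrix_elem continuous_induced_dom i j

theorem continuous_firstColumn : Continuous firstColumn :=
  equivRealProdCLM.symm.continuous.comp ((continuous_entry 0 0).prodMk (continuous_entry 1 0))

theorem continuous_shear : Continuous shear :=
  (((continuous_entry 0 0).mul (continuous_entry 0 1)).add
    ((continuous_entry 1 0).mul (continuous_entry 1 1))).div
    (continuous_normSq.comp continuous_firstColumn)
    fun g => normSq_eq_zero.not.2 (firstColumn_ne_zero g)

theorem continuous_ofFirstColumnShear {X : Type*} [TopologicalSpace X] {z : X → ℂ} {l : X → ℝ}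
    (hz : Continuous z) (hz₀ : ∀ x, z x ≠ 0) (hl : Continuous l) :
    Continuous fun x => ofFirstColumnShear (z x) (hz₀ x) (l x) := by
  have hN : ∀ x, normSq (z x) ≠ 0 := fun x => normSq_eq_zero.not.2 (hz₀ x)
  have hre : Continuous fun x => (z x).re := continuous_re.comp hz
  have him : Continuous fun x => (z x).im := continuous_im.comp hz
  have hnormSq : Continuous fun x => normSq (z x) := continuous_normSq.comp hz
  refine continuous_induced_rng.2 (continuous_matrix fun i j => ?_)
  fin_cases i <;> fin_cases j
  · exact hre
  · exact (him.neg.div hnormSq hN).add (hl.mul hre)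
  · exact him
  · exact (hre.div hnormSq hN).add (hl.mul him)

/-- The first column and the shear are global coordinates on `SL(2, ℝ)`; they are stated here over
a set `s` of admissible first columns, the case `s = {0}ᶜ` being the whole group. -/
def firstColumnPreimageHomeomorph (s : Set ℂ) (hs : 0 ∉ s) : firstColumn ⁻¹' s ≃ₜ s × ℝ where
  toFun g := (⟨firstColumn g, g.2⟩, shear g)
  invFun p := ⟨ofFirstColumnShear p.1 (ne_of_mem_of_not_mem p.1.2 hs) p.2, p.1.2⟩
  left_inv g := Subtype.ext (ofFirstColumnShear_firstColumn_shear g)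
  right_inv p := Prod.ext rfl (shear_ofFirstColumnShear p.1 (ne_of_mem_of_not_mem p.1.2 hs) p.2)
  continuous_toFun :=
    ((continuous_firstColumn.comp continuous_subtype_val).subtype_mk _).prodMk
      (continuous_shear.comp continuous_subtype_val)
  continuous_invFun :=
    (continuous_ofFirstColumnShear (continuous_subtype_val.comp continuous_fst)
      (fun p => ne_of_mem_of_not_mem p.1.2 hs) continuous_snd).subtype_mk _

theorem isSimplyConnected_firstColumn_preimage {s : Set ℂ} (hs : IsSimplyConnected s)
    (hs₀ : 0 ∉ s) : IsSimplyConnected (firstColumn ⁻¹' s) := by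
  have : SimplyConnectedSpace s := hs.simplyConnectedSpace
  obtain ⟨contraction⟩ := ContractibleSpace.hequiv ℝ Unit
  exact (((firstColumnPreimageHomeomorph s hs₀).toHomotopyEquiv.trans
    (.prodCongr (.refl s) contraction)).trans
    (Homeomorph.prodPUnit s).toHomotopyEquiv).simplyConnectedSpace

theorem homotopic_of_one_zero_nonneg {g₀ g₁ : SL(2, ℝ)} {γ δ : Path g₀ g₁}
    (hγ : range γ ⊆ {g | 0 ≤ g 1 0}) (hδ : range δ ⊆ {g | 0 ≤ g 1 0}) : γ.Homotopic δ := by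
  have hslit : IsSimplyConnected (firstColumn ⁻¹' (I • slitPlane)) := by
    refine isSimplyConnected_firstColumn_preimage ?_ ?_
    · exact (isSimplyConnected_smul_set₀_iff I_ne_zero).2 isSimplyConnected_slitPlane
    · rw [zero_mem_smul_set_iff I_ne_zero]
      exact zero_notMem_slitPlane
  have hsub : {g : SL(2, ℝ) | 0 ≤ g 1 0} ⊆ firstColumn ⁻¹' (I • slitPlane) := fun g hg =>
    mem_I_smul_slitPlane_of_im_nonneg (firstColumn_ne_zero g) hg
  exact path_homotopic_of_range_subset hslit (hγ.trans hsub) (hδ.trans hsub)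

theorem mul_u_one_zero (g : SL(2, ℝ)) (x : ℝ) : (g * u x) 1 0 = g 1 0 := by
  rw [Matrix.SpecialLinearGroup.coe_mul]
  simp [u, Matrix.mul_apply]

theorem mul_u_one_one (g : SL(2, ℝ)) (x : ℝ) : (g * u x) 1 1 = g 1 0 * x + g 1 1 := by
  rw [Matrix.SpecialLinearGroup.coe_mul]
  simp [u, Matrix.mul_apply]

theorem mul_v_one_zero (g : SL(2, ℝ)) (x : ℝ) : (g * v x) 1 0 = g 1 0 + g 1 1 * x := by
  rw [Matrix.SpecialLinearGroup.coe_mul]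
  simp [v, Matrix.mul_apply]

theorem mul_v_one_one (g : SL(2, ℝ)) (x : ℝ) : (g * v x) 1 1 = g 1 1 := by
  rw [Matrix.SpecialLinearGroup.coe_mul]
  simp [v, Matrix.mul_apply]

theorem mul_v_one_zero_nonneg {g : SL(2, ℝ)} {x : ℝ} (h₀ : 0 ≤ g 1 0) (h₁ : 0 ≤ (g * v x) 1 0)
    (t : unitInterval) : 0 ≤ (g * v (t * x)) 1 0 := by
  have hconvex : (g * v (t * x)) 1 0 = (1 - t) * g 1 0 + t * (g * v x) 1 0 := by
    rw [mul_v_one_zero, mul_v_one_zero]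
    ring
  rw [hconvex]
  exact add_nonneg (mul_nonneg (sub_nonneg.2 t.2.2) h₀) (mul_nonneg t.2.1 h₁)

theorem one_zero_eq_of_mul_eq_negI {g : SL(2, ℝ)} {a b x : ℝ}
    (h : g * u a * v x * u b = negI) : g 1 0 = x := by
  have h₁₀ : (g * u a * v x * u b) 1 0 = 0 := by rw [h]; rfl
  have h₁₁ : (g * u a * v x * u b) 1 1 = -1 := by rw [h]; rfl
  simp only [mul_u_one_zero, mul_u_one_one, mul_v_one_zero, mul_v_one_one] at h₁₀ h₁₁
  linear_combination (1 + x * b) * h₁₀ - x * h₁₁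

theorem rotSL_neg_pi_mul_one_zero_nonneg (t : unitInterval) : 0 ≤ rotSL (-(π * t)) 1 0 := by
  have hrot : rotSL (-(π * t)) 1 0 = Real.sin (π * t) := by simp [rotSL]
  rw [hrot]
  exact Real.sin_nonneg_of_nonneg_of_le_pi (mul_nonneg pi_nonneg t.2.1)
    (mul_le_of_le_one_right pi_nonneg t.2.2)

theorem hexagon_path_eps_neg_one_homotopic_general (x₁ x₂ x₃ b₁ b₂ b₃ : ℝ)
    (hx₁ : 0 ≤ x₁) (hx₃ : 0 ≤ x₃)
    (heq : v x₁ * u (-b₃) * v x₂ * u (-b₁) * v x₃ * u (-b₂) = negI)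
    (p₁ : Path (1 : Matrix.SpecialLinearGroup (Fin 2) ℝ) (v x₁))
    (p₂ : Path (v x₁) (v x₁ * u (-b₃)))
    (p₃ : Path (v x₁ * u (-b₃)) (v x₁ * u (-b₃) * v x₂))
    (p₄ : Path (v x₁ * u (-b₃) * v x₂) (v x₁ * u (-b₃) * v x₂ * u (-b₁)))
    (p₅ : Path (v x₁ * u (-b₃) * v x₂ * u (-b₁))
      (v x₁ * u (-b₃) * v x₂ * u (-b₁) * v x₃))
    (p₆ : Path (v x₁ * u (-b₃) * v x₂ * u (-b₁) * v x₃) negI)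
    (hp₁ : ∀ t : unitInterval, p₁ t = v (t * x₁))
    (hp₂ : ∀ t : unitInterval, p₂ t = v x₁ * u (-(t * b₃)))
    (hp₃ : ∀ t : unitInterval, p₃ t = v x₁ * u (-b₃) * v (t * x₂))
    (hp₄ : ∀ t : unitInterval, p₄ t = v x₁ * u (-b₃) * v x₂ * u (-(t * b₁)))
    (hp₅ : ∀ t : unitInterval, p₅ t = v x₁ * u (-b₃) * v x₂ * u (-b₁) * v (t * x₃))
    (hp₆ : ∀ t : unitInterval,
      p₆ t = v x₁ * u (-b₃) * v x₂ * u (-b₁) * v x₃ * u (-(t * b₂)))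
    (ω : Path (1 : Matrix.SpecialLinearGroup (Fin 2) ℝ) negI)
    (hω : ∀ t : unitInterval, ω t = rotSL (-(π * t))) :
    (((((p₁.trans p₂).trans p₃).trans p₄).trans p₅).trans p₆).Homotopic ω := by
  have hx₃_eq : (v x₁ * u (-b₃) * v x₂) 1 0 = x₃ := one_zero_eq_of_mul_eq_negI heq
  have hclose : (v x₁ * u (-b₃) * v x₂ * u (-b₁) * v x₃) 1 0 = 0 := by
    rw [← mul_u_one_zero _ (-b₂), heq]
    rfl
  refine homotopic_of_one_zero_nonneg ?_ (range_subset_iff.2 fun t => ?_)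
  · simp only [Path.trans_range, union_subset_iff, range_subset_iff, mem_ofPred_eq, hp₁, hp₂, hp₃,
      hp₄, hp₅, hp₆, mul_u_one_zero, hx₃_eq, hclose]
    refine ⟨⟨⟨⟨⟨fun t => ?_, fun _ => hx₁⟩, fun t => ?_⟩, fun _ => hx₃⟩, fun t => ?_⟩,
      fun _ => le_rfl⟩
    · exact mul_nonneg t.2.1 hx₁
    · exact mul_v_one_zero_nonneg (by rwa [mul_u_one_zero]) (hx₃_eq.symm ▸ hx₃) t
    · exact mul_v_one_zero_nonneg (by rwa [mul_u_one_zero, hx₃_eq]) hclose.ge t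
  · rw [mem_ofPred_eq, hω]
    exact rotSL_neg_pi_mul_one_zero_nonneg t

theorem hexagon_path_eps_neg_one_homotopic (x₁ x₂ x₃ b₁ b₂ b₃ : ℝ)
    (hx₁ : 0 < x₁) (hx₂ : 0 < x₂) (hx₃ : 0 < x₃)
    (heq : v x₁ * u (-b₃) * v x₂ * u (-b₁) * v x₃ * u (-b₂) = negI)
    (p₁ : Path (1 : Matrix.SpecialLinearGroup (Fin 2) ℝ) (v x₁))
    (p₂ : Path (v x₁) (v x₁ * u (-b₃)))
    (p₃ : Path (v x₁ * u (-b₃)) (v x₁ * u (-b₃) * v x₂))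
    (p₄ : Path (v x₁ * u (-b₃) * v x₂) (v x₁ * u (-b₃) * v x₂ * u (-b₁)))
    (p₅ : Path (v x₁ * u (-b₃) * v x₂ * u (-b₁))
      (v x₁ * u (-b₃) * v x₂ * u (-b₁) * v x₃))
    (p₆ : Path (v x₁ * u (-b₃) * v x₂ * u (-b₁) * v x₃) negI)
    (hp₁ : ∀ t : unitInterval, p₁ t = v (t * x₁))
    (hp₂ : ∀ t : unitInterval, p₂ t = v x₁ * u (-(t * b₃)))
    (hp₃ : ∀ t : unitInterval, p₃ t = v x₁ * u (-b₃) * v (t * x₂))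
    (hp₄ : ∀ t : unitInterval, p₄ t = v x₁ * u (-b₃) * v x₂ * u (-(t * b₁)))
    (hp₅ : ∀ t : unitInterval, p₅ t = v x₁ * u (-b₃) * v x₂ * u (-b₁) * v (t * x₃))
    (hp₆ : ∀ t : unitInterval,
      p₆ t = v x₁ * u (-b₃) * v x₂ * u (-b₁) * v x₃ * u (-(t * b₂)))
    (ω : Path (1 : Matrix.SpecialLinearGroup (Fin 2) ℝ) negI)
    (hω : ∀ t : unitInterval, ω t = rotSL (-(π * t))) :
    (((((p₁.trans p₂).trans p₃).trans p₄).trans p₅).trans p₆).Homotopic ω :=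
  hexagon_path_eps_neg_one_homotopic_general x₁ x₂ x₃ b₁ b₂ b₃ hx₁.le hx₃.le heq
    p₁ p₂ p₃ p₄ p₅ p₆ hp₁ hp₂ hp₃ hp₄ hp₅ hp₆ ω hω
end
end

section
/- Let a, b, c, d, e, f be positive real numbers and let α, β, γ, δ ∈ {−1, 1}. Then the pair of equations α·b·d + β·a·c = γ·e·f and β·b·d + α·a·c = δ·e·f holds if and only if α·b·d + β·a·c = γ·e·f and α·β = γ·δ. (This is the signed Ptolemy relation governing the change of coordinates under a diagonal flip.) -/
/-!
Put `x = bd`, `y = ac` and `z = ef`. As `α² = β² = 1`, multiplying the first relation by `αβ`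
interchanges the two signs on its left-hand side. Given the first relation, the second therefore
reads `αβγz = δz`; cancel `z`, and move `γ` to the other side using `γ² = 1`.
-/

theorem mul_eq_iff_eq_mul_of_mul_self_eq_one {M : Type*} [Monoid M] {u x y : M} (hu : u * u = 1) :
    u * x = y ↔ x = u * y :=
  have mul_left_involutive : Function.Involutive (u * ·) := fun z => by
    simp only [← mul_assoc, hu, one_mul]
  mul_left_involutive.eq_iff

section CommSemiring

variable {R : Type*} [CommSemiring R] {α β γ δ x y z : R}

theorem mul_mul_add_mul_of_mul_self_eq_one (hα : α * α = 1) (hβ : β * β = 1) :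
    α * β * (α * x + β * y) = β * x + α * y :=
  calc
    α * β * (α * x + β * y) = α * α * (β * x) + β * β * (α * y) := by ring
    _ = β * x + α * y := by rw [hα, hβ, one_mul, one_mul]

theorem signed_ptolemy_relation_general (hα : α * α = 1) (hβ : β * β = 1) (hγ : γ * γ = 1)
    (hz : IsRightRegular z) :
    (α * x + β * y = γ * z ∧ β * x + α * y = δ * z) ↔
      (α * x + β * y = γ * z ∧ α * β = γ * δ) := by
  refine and_congr_right fun h => ?_
  calc
    β * x + α * y = δ * z ↔ γ * (α * β) * z = δ * z := by
      rw [← mul_mul_add_mul_of_mul_self_eq_one hα hβ, h, ← mul_assoc, mul_comm (α * β) γ]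
    _ ↔ γ * (α * β) = δ := hz.eq_iff
    _ ↔ α * β = γ * δ := mul_eq_iff_eq_mul_of_mul_self_eq_one hγ

end CommSemiring

/- STATEMENT 11: For positive reals a, b, c, d, e, f and signs α, β, γ, δ ∈ {−1, 1}, the pair
of equations α·b·d + β·a·c = γ·e·f and β·b·d + α·a·c = δ·e·f holds iff
α·b·d + β·a·c = γ·e·f and α·β = γ·δ (the signed Ptolemy relation). -/

theorem signed_ptolemy_relation (a b c d e f : ℝ)
    (ha : 0 < a) (hb : 0 < b) (hc : 0 < c) (hd : 0 < d) (he : 0 < e) (hf : 0 < f)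
    (α β γ δ : ℝ)
    (hα : α = 1 ∨ α = -1) (hβ : β = 1 ∨ β = -1) (hγ : γ = 1 ∨ γ = -1) (hδ : δ = 1 ∨ δ = -1) :
    (α * b * d + β * a * c = γ * e * f ∧ β * b * d + α * a * c = δ * e * f) ↔
      (α * b * d + β * a * c = γ * e * f ∧ α * β = γ * δ) := by
  have hef : IsRegular (e * f) := .of_ne_zero (mul_pos he hf).ne'
  simpa only [mul_assoc] using signed_ptolemy_relation_general (mul_self_eq_one_iff.mpr hα)
    (mul_self_eq_one_iff.mpr hβ) (mul_self_eq_one_iff.mpr hγ) hef.right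
end
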